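/- Let N be a continuous nest on a separable infinite-dimensional complex Hilbert space and let I be a stable ideal of Alg N. For each X ∈ I and ε > 0 let P_{X,ε} denote the set of all intervals E of N with ‖EXE‖_e < ε. Then O := {P_{X,ε} : X ∈ I, ε > 0} is a stable net of intervals of N: it is directed under refinement, and θ(P) ∈ O for every P ∈ O and every order automorphism θ of N. -/

import Mathlib

open Set Filter Topology

noncomputable def essNorm {H : Type*} [NormedAddCommGroup H] [InnerProductSpace ℂ H]
    [CompleteSpace H] (T : H →L[ℂ] H) : ℝ :=
  Metric.infDist T {K : H →L[ℂ] H | IsCompactOperator ⇑K}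

/-- A continuous nest on `H`, parameterized by `[0,1]`: an increasing family of orthogonal
projections `N t` whose ranges strictly increase, with `N 0 = 0`, `N 1 = 1`, and
`t ↦ N t ξ` norm-continuous on `[0,1]` for every `ξ`. -/
structure ContinuousNest (H : Type*) [NormedAddCommGroup H] [InnerProductSpace ℂ H]
    [CompleteSpace H] where
  N : ℝ → H →L[ℂ] H
  idem : ∀ t ∈ Icc (0 : ℝ) 1, IsIdempotentElem (N t)
  selfAdjoint : ∀ t ∈ Icc (0 : ℝ) 1, IsSelfAdjoint (N t)
  range_lt : ∀ s t : ℝ, s ∈ Icc (0 : ℝ) 1 → t ∈ Icc (0 : ℝ) 1 → s < t →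
    LinearMap.range (N s).toLinearMap < LinearMap.range (N t).toLinearMap
  N_zero : N 0 = 0
  N_one : N 1 = 1
  contOn : ∀ ξ : H, ContinuousOn (fun t => N t ξ) (Icc (0 : ℝ) 1)

variable {H : Type*} [NormedAddCommGroup H] [InnerProductSpace ℂ H] [CompleteSpace H]

/-- `P₁` refines `P₂`: every interval of `P₁` is dominated by an interval of `P₂`
(in the Loewner order). -/
def OpRefines (P₁ P₂ : Set (H →L[ℂ] H)) : Prop :=
  ∀ E ∈ P₁, ∃ F ∈ P₂, ContinuousLinearMap.IsPositive (F - E)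

namespace ContinuousNest

variable (𝒩 : ContinuousNest H)

/-- The nest algebra of `𝒩`. -/
def alg : Set (H →L[ℂ] H) := {T | ∀ t ∈ Icc (0 : ℝ) 1, (1 - 𝒩.N t) * T * 𝒩.N t = 0}

/-- An interval of the nest: a difference `N t - N s` with `0 ≤ s ≤ t ≤ 1`. -/
def IsInterval (E : H →L[ℂ] H) : Prop :=
  ∃ s t : ℝ, 0 ≤ s ∧ s ≤ t ∧ t ≤ 1 ∧ E = 𝒩.N t - 𝒩.N s

def IsIntervalFamily (P : Set (H →L[ℂ] H)) : Prop := ∀ E ∈ P, 𝒩.IsInterval E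

/-- A net of families of intervals: directed under refinement. -/
def IsNet (O : Set (Set (H →L[ℂ] H))) : Prop :=
  (∀ P ∈ O, 𝒩.IsIntervalFamily P) ∧
  ∀ P ∈ O, ∀ Q ∈ O, ∃ R ∈ O, OpRefines R P ∧ OpRefines R Q

def nestSet : Set (H →L[ℂ] H) := 𝒩.N '' Icc (0 : ℝ) 1

/-- An order automorphism of the nest: an order-preserving bijection of `{N t : t ∈ [0,1]}`
onto itself. -/
def IsAuto (θ : (H →L[ℂ] H) → H →L[ℂ] H) : Prop :=
  Set.BijOn θ 𝒩.nestSet 𝒩.nestSet ∧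
  ∀ s t : ℝ, s ∈ Icc (0 : ℝ) 1 → t ∈ Icc (0 : ℝ) 1 → s ≤ t →
    ContinuousLinearMap.IsPositive (θ (𝒩.N t) - θ (𝒩.N s))

/-- The image family `θ(P) = {θ(N t) - θ(N s) : N t - N s ∈ P}`. -/
def autoImage (θ : (H →L[ℂ] H) → H →L[ℂ] H) (P : Set (H →L[ℂ] H)) : Set (H →L[ℂ] H) :=
  {E | ∃ s t : ℝ, 0 ≤ s ∧ s ≤ t ∧ t ≤ 1 ∧ 𝒩.N t - 𝒩.N s ∈ P ∧ E = θ (𝒩.N t) - θ (𝒩.N s)}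

/-- A stable net of intervals. -/
def IsStableNet (O : Set (Set (H →L[ℂ] H))) : Prop :=
  𝒩.IsNet O ∧ ∀ θ, 𝒩.IsAuto θ → ∀ P ∈ O, 𝒩.autoImage θ P ∈ O

/-- The kernel of a net `O`: those `X` in the nest algebra with
`lim_{P ∈ O} sup_{E ∈ P} ‖EXE‖ₑ = 0`; since the sup decreases under refinement, this limit
is `0` iff for every `ε > 0` some `P ∈ O` has all `‖EXE‖ₑ < ε`. -/
def kernel (O : Set (Set (H →L[ℂ] H))) : Set (H →L[ℂ] H) :=
  {X | X ∈ 𝒩.alg ∧ ∀ ε : ℝ, 0 < ε → ∃ P ∈ O, ∀ E ∈ P, essNorm (E * X * E) < ε}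

/-- A two-sided ideal of the nest algebra. -/
def IsIdeal (I : Set (H →L[ℂ] H)) : Prop :=
  I ⊆ 𝒩.alg ∧ (0 : H →L[ℂ] H) ∈ I ∧
  (∀ X ∈ I, ∀ Y ∈ I, X + Y ∈ I) ∧ (∀ X ∈ I, -X ∈ I) ∧
  ∀ A ∈ 𝒩.alg, ∀ X ∈ I, A * X ∈ I ∧ X * A ∈ I

/-- A stable ideal: a norm-closed two-sided ideal invariant under every automorphism
`T ↦ S T S⁻¹` of the nest algebra implemented by an invertible `S ∈ B(H)`. -/
def IsStableIdeal (I : Set (H →L[ℂ] H)) : Prop :=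
  𝒩.IsIdeal I ∧ IsClosed I ∧
  ∀ S : (H →L[ℂ] H)ˣ,
    (fun T => (↑S : H →L[ℂ] H) * T * (↑S⁻¹ : H →L[ℂ] H)) '' 𝒩.alg = 𝒩.alg →
    (fun T => (↑S : H →L[ℂ] H) * T * (↑S⁻¹ : H →L[ℂ] H)) '' I = I

end ContinuousNest


set_option linter.unusedSectionVars false

section NestBasics

open InnerProductSpace ContinuousLinearMap

/-- A total version of a (not necessarily strict) continuous nest. -/
structure PreNest (E : Type*) [NormedAddCommGroup E] [InnerProductSpace ℂ E]
    [CompleteSpace E] where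
  N : ℝ → E →L[ℂ] E
  sa : ∀ t x y, inner ℂ (N t x) y = inner ℂ x (N t y)
  mono : ∀ s t, s ≤ t → ∀ x, N t (N s x) = N s x
  zero : ∀ t ≤ 0, N t = 0
  one : ∀ t, 1 ≤ t → N t = 1
  cont : ∀ x, Continuous fun t => N t x

variable {E F G : Type*} [NormedAddCommGroup E] [InnerProductSpace ℂ E] [CompleteSpace E]
  [NormedAddCommGroup F] [InnerProductSpace ℂ F] [CompleteSpace F]
  [NormedAddCommGroup G] [InnerProductSpace ℂ G] [CompleteSpace G]

namespace PreNest

lemma mono' (P : PreNest E) {s t : ℝ} (h : s ≤ t) (x : E) : P.N s (P.N t x) = P.N s x := by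
  apply ext_inner_right ℂ
  intro y
  rw [P.sa, P.sa, P.sa, P.mono s t h]

lemma idem (P : PreNest E) (t : ℝ) (x : E) : P.N t (P.N t x) = P.N t x := P.mono t t le_rfl x

/-- Bounded maps respecting two nests. -/
def Mor (P : PreNest E) (Q : PreNest F) (A : E →L[ℂ] F) : Prop :=
  ∀ t x, Q.N t (A (P.N t x)) = A (P.N t x)

lemma Mor.comp {P : PreNest E} {Q : PreNest F} {R : PreNest G} {A : E →L[ℂ] F} {B : F →L[ℂ] G}
    (hB : Mor Q R B) (hA : Mor P Q A) : Mor P R (B ∘L A) := by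
  intro t x
  simp only [ContinuousLinearMap.comp_apply]
  rw [← hA t x, hB t]

lemma Mor.add {P : PreNest E} {Q : PreNest F} {A B : E →L[ℂ] F}
    (hA : Mor P Q A) (hB : Mor P Q B) : Mor P Q (A + B) := by
  intro t x; simp [hA t x, hB t x]

lemma Mor.sub {P : PreNest E} {Q : PreNest F} {A B : E →L[ℂ] F}
    (hA : Mor P Q A) (hB : Mor P Q B) : Mor P Q (A - B) := by
  intro t x; simp [hA t x, hB t x]

lemma Mor.smul {P : PreNest E} {Q : PreNest F} {A : E →L[ℂ] F} (c : ℂ)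
    (hA : Mor P Q A) : Mor P Q (c • A) := by
  intro t x; simp [hA t x]

lemma Mor.one {P : PreNest E} : Mor P P 1 := by
  intro t x; simp [P.idem]

lemma Mor.mul {P : PreNest E} {A B : E →L[ℂ] E}
    (hA : Mor P P A) (hB : Mor P P B) : Mor P P (A * B) := Mor.comp hA hB

/-- `T` is strictly triangular with room `δ`. -/
def Room (P : PreNest E) (δ : ℝ) (T : E →L[ℂ] E) : Prop :=
  ∀ s t, t ≤ s + δ → ∀ x, P.N s (T (P.N t x)) = T (P.N t x)

lemma Room.mono {P : PreNest E} {δ δ' : ℝ} {T : E →L[ℂ] E} (h : Room P δ T) (hd : δ' ≤ δ) :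
    Room P δ' T := fun s t hst x => h s t (by linarith) x

lemma Room.mor {P : PreNest E} {δ : ℝ} {T : E →L[ℂ] E} (h : Room P δ T) (hd : 0 ≤ δ) :
    Mor P P T := fun t x => h t t (by linarith) x

lemma Room.add {P : PreNest E} {δ : ℝ} {T S : E →L[ℂ] E} (h : Room P δ T) (h' : Room P δ S) :
    Room P δ (T + S) := fun s t hst x => by simp [h s t hst x, h' s t hst x]

lemma Room.smul {P : PreNest E} {δ : ℝ} {T : E →L[ℂ] E} (h : Room P δ T) (c : ℂ) :
    Room P δ (c • T) := fun s t hst x => by simp [h s t hst x]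

lemma Room.mul_mor {P : PreNest E} {δ : ℝ} {T S : E →L[ℂ] E} (h : Room P δ T) (h' : Mor P P S) :
    Room P δ (T * S) := fun s t hst x => by
  simp only [mul_apply_eq_comp]
  rw [← h' t x, h s t hst]

lemma Room.mor_mul {P : PreNest E} {δ : ℝ} {T S : E →L[ℂ] E} (h : Room P δ T) (h' : Mor P P S) :
    Room P δ (S * T) := fun s t hst x => by
  simp only [mul_apply_eq_comp]
  rw [← h s t hst, h' s]

lemma Room.mul {P : PreNest E} {δ δ' : ℝ} {T S : E →L[ℂ] E} (h : Room P δ T) (h' : Room P δ' S) :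
    Room P (δ + δ') (T * S) := fun s t hst x => by
  simp only [mul_apply_eq_comp]
  rw [← h' (s + δ) t (by linarith), h s _ le_rfl]

lemma Room.pow {P : PreNest E} {δ : ℝ} {T : E →L[ℂ] E} (h : Room P δ T) (n : ℕ) :
    Room P ((n + 1) * δ) (T ^ (n + 1)) := by
  induction n with
  | zero => simpa using h
  | succ n ih =>
    rw [pow_succ]
    have := ih.mul h
    convert this using 1
    push_cast; ring

lemma Room.nilp {P : PreNest E} {δ : ℝ} {T : E →L[ℂ] E} (h : Room P δ T) (hd : 0 < δ) :
    ∃ n : ℕ, T ^ (n + 1) = 0 := by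
  obtain ⟨n, hn⟩ := exists_nat_gt (1 / δ)
  refine ⟨n, ?_⟩
  have h1 := h.pow n
  ext x
  have := h1 0 1 (by rw [div_lt_iff₀ hd] at hn; nlinarith) x
  rw [P.zero 0 le_rfl, P.one 1 le_rfl] at this
  simpa using this.symm

end PreNest

/-- Finite rank operators. -/
def FR (E F : Type*) [NormedAddCommGroup E] [InnerProductSpace ℂ E]
    [NormedAddCommGroup F] [InnerProductSpace ℂ F] : Submodule ℂ (E →L[ℂ] F) :=
  Submodule.span ℂ {T | ∃ (x : F) (y : E), T = rankOne ℂ x y}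

lemma FR.rankOne_mem (x : F) (y : E) : rankOne ℂ x y ∈ FR E F :=
  Submodule.subset_span ⟨x, y, rfl⟩

lemma FR.comp_left {T : E →L[ℂ] F} (hT : T ∈ FR E F) (S : F →L[ℂ] G) : S ∘L T ∈ FR E G := by
  induction hT using Submodule.span_induction with
  | mem T h =>
    obtain ⟨x, y, rfl⟩ := h
    rw [comp_rankOne]; exact FR.rankOne_mem _ _
  | zero => simp
  | add a b _ _ ha hb => rw [ContinuousLinearMap.comp_add]; exact add_mem ha hb
  | smul c a _ ha => rw [ContinuousLinearMap.comp_smul]; exact Submodule.smul_mem _ _ ha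

lemma FR.comp_right {T : E →L[ℂ] F} (hT : T ∈ FR E F) (S : G →L[ℂ] E) : T ∘L S ∈ FR G F := by
  induction hT using Submodule.span_induction with
  | mem T h =>
    obtain ⟨x, y, rfl⟩ := h
    rw [rankOne_comp]; exact FR.rankOne_mem _ _
  | zero => simp
  | add a b _ _ ha hb => rw [ContinuousLinearMap.add_comp]; exact add_mem ha hb
  | smul c a _ ha => rw [ContinuousLinearMap.smul_comp]; exact Submodule.smul_mem _ _ ha

lemma FR.mul_left {T : E →L[ℂ] E} (hT : T ∈ FR E E) (S : E →L[ℂ] E) : S * T ∈ FR E E :=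
  FR.comp_left hT S

lemma FR.mul_right {T : E →L[ℂ] E} (hT : T ∈ FR E E) (S : E →L[ℂ] E) : T * S ∈ FR E E :=
  FR.comp_right hT S

lemma FR.adjoint_mem {T : E →L[ℂ] F} (hT : T ∈ FR E F) : adjoint T ∈ FR F E := by
  induction hT using Submodule.span_induction with
  | mem T h =>
    obtain ⟨x, y, rfl⟩ := h
    rw [adjoint_rankOne]; exact FR.rankOne_mem _ _
  | zero => simp
  | add a b _ _ ha hb => rw [map_add]; exact add_mem ha hb
  | smul c a _ ha => rw [map_smulₛₗ]; exact Submodule.smul_mem _ _ ha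

lemma FR.list {T : E →L[ℂ] F} (hT : T ∈ FR E F) : ∃ l : List F, ∃ C : ℝ, 0 ≤ C ∧
    ∀ (S : F →L[ℂ] F) (ε : ℝ), 0 ≤ ε → (∀ x ∈ l, ‖S x‖ ≤ ε) → ‖S ∘L T‖ ≤ C * ε := by
  induction hT using Submodule.span_induction with
  | mem T h =>
    obtain ⟨x, y, rfl⟩ := h
    refine ⟨[x], ‖y‖, norm_nonneg _, fun S ε hε h => ?_⟩
    rw [comp_rankOne, norm_rankOne, mul_comm]
    have := h x (by simp)
    gcongr
  | zero => exact ⟨[], 0, le_rfl, fun S ε _ _ => by simp⟩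
  | add a b _ _ ha hb =>
    obtain ⟨l, C, hC, h⟩ := ha
    obtain ⟨l', C', hC', h'⟩ := hb
    refine ⟨l ++ l', C + C', by positivity, fun S ε hε hS => ?_⟩
    rw [ContinuousLinearMap.comp_add, add_mul]
    refine (norm_add_le _ _).trans (add_le_add (h S ε hε ?_) (h' S ε hε ?_))
    · intro x hx; exact hS x (by simp [hx])
    · intro x hx; exact hS x (by simp [hx])
  | smul c a _ ha =>
    obtain ⟨l, C, hC, h⟩ := ha
    refine ⟨l, ‖c‖ * C, by positivity, fun S ε hε hS => ?_⟩
    rw [ContinuousLinearMap.comp_smul, norm_smul, mul_assoc]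
    have := h S ε hε hS
    gcongr

lemma FR.compact {T : E →L[ℂ] F} (hT : T ∈ FR E F) : IsCompactOperator T := by
  induction hT using Submodule.span_induction with
  | mem T h =>
    obtain ⟨x, y, rfl⟩ := h
    have h1 := isCompactOperator_of_locallyCompactSpace_dom (innerSL ℂ y)
    have h2 := h1.clm_comp (toSpanSingleton ℂ x)
    have h3 : ⇑(rankOne ℂ x y) = ⇑(toSpanSingleton ℂ x) ∘ ⇑(innerSL ℂ y) := by
      ext z; simp
    rw [h3]
    exact h2
  | zero => exact isCompactOperator_zero
  | add a b _ _ ha hb => exact ha.add hb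
  | smul c a _ ha => exact ha.smul c

lemma FR.findim {T : E →L[ℂ] F} (hT : T ∈ FR E F) :
    ∃ W : Submodule ℂ F, FiniteDimensional ℂ W ∧ ∀ x, T x ∈ W := by
  induction hT using Submodule.span_induction with
  | mem T h =>
    obtain ⟨x, y, rfl⟩ := h
    refine ⟨ℂ ∙ x, inferInstance, fun z => ?_⟩
    rw [rankOne_apply]
    exact Submodule.smul_mem _ _ (Submodule.mem_span_singleton_self x)
  | zero => exact ⟨⊥, inferInstance, fun x => by simp⟩
  | add a b _ _ ha hb =>
    obtain ⟨W, hW, h⟩ := ha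
    obtain ⟨W', hW', h'⟩ := hb
    exact ⟨W ⊔ W', inferInstance, fun x => Submodule.add_mem_sup (h x) (h' x)⟩
  | smul c a _ ha =>
    obtain ⟨W, hW, h⟩ := ha
    exact ⟨W, hW, fun x => Submodule.smul_mem _ _ (h x)⟩

/-- Finite rank with some room. -/
def PreNest.TT (P : PreNest E) (T : E →L[ℂ] E) : Prop :=
  T ∈ FR E E ∧ ∃ δ > 0, P.Room δ T

namespace PreNest

lemma TT.mor {P : PreNest E} {T : E →L[ℂ] E} (h : P.TT T) : Mor P P T := by
  obtain ⟨_, δ, hd, h⟩ := h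
  exact h.mor hd.le

lemma TT.zero {P : PreNest E} : P.TT 0 :=
  ⟨zero_mem _, 1, one_pos, fun s t _ x => by simp⟩

lemma TT.add {P : PreNest E} {T S : E →L[ℂ] E} (h : P.TT T) (h' : P.TT S) : P.TT (T + S) := by
  obtain ⟨h1, δ, hd, h⟩ := h
  obtain ⟨h2, δ', hd', h'⟩ := h'
  exact ⟨add_mem h1 h2, min δ δ', lt_min hd hd',
    (h.mono (min_le_left _ _)).add (h'.mono (min_le_right _ _))⟩

lemma TT.smul {P : PreNest E} {T : E →L[ℂ] E} (h : P.TT T) (c : ℂ) : P.TT (c • T) := by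
  obtain ⟨h1, δ, hd, h⟩ := h
  exact ⟨Submodule.smul_mem _ _ h1, δ, hd, h.smul c⟩

lemma TT.sub {P : PreNest E} {T S : E →L[ℂ] E} (h : P.TT T) (h' : P.TT S) : P.TT (T - S) := by
  have := h.add (h'.smul (-1))
  convert this using 1
  simp [sub_eq_add_neg]

lemma TT.mul_mor {P : PreNest E} {T S : E →L[ℂ] E} (h : P.TT T) (h' : Mor P P S) :
    P.TT (T * S) := by
  obtain ⟨h1, δ, hd, h⟩ := h
  exact ⟨FR.mul_right h1 _, δ, hd, h.mul_mor h'⟩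

lemma TT.mor_mul {P : PreNest E} {T S : E →L[ℂ] E} (h : P.TT T) (h' : Mor P P S) :
    P.TT (S * T) := by
  obtain ⟨h1, δ, hd, h⟩ := h
  exact ⟨FR.mul_left h1 _, δ, hd, h.mor_mul h'⟩

lemma TT.sum {P : PreNest E} {ι : Type*} (s : Finset ι) (T : ι → E →L[ℂ] E)
    (h : ∀ i ∈ s, P.TT (T i)) : P.TT (∑ i ∈ s, T i) := by
  classical
  induction s using Finset.induction_on with
  | empty => simpa using TT.zero
  | insert a s ha ih =>
    rw [Finset.sum_insert ha]
    exact (h a (by simp)).add (ih fun i hi => h i (by simp [hi]))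

lemma TT.rankOne {P : PreNest E} {x y : E} {s t : ℝ} (hst : s < t) (hx : P.N s x = x)
    (hy : P.N t y = 0) : P.TT (rankOne ℂ x y) := by
  refine ⟨FR.rankOne_mem _ _, t - s, by linarith, fun s' t' h z => ?_⟩
  rw [rankOne_apply]
  by_cases h1 : s ≤ s'
  · rw [map_smul, ← hx, P.mono s s' h1]
  · have : inner ℂ y (P.N t' z) = 0 := by
      rw [← P.sa, ← P.mono' (show t' ≤ t by linarith) y, hy]; simp
    rw [this]; simp

end PreNest

/-- Partial isometry built from two orthonormal families. -/
lemma norm_sum_rankOne_le {ι : Type*} [Fintype ι] {v : ι → F} {w : ι → E}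
    (hv : Orthonormal ℂ v) (hw : Orthonormal ℂ w) : ‖∑ i, rankOne ℂ (v i) (w i)‖ ≤ 1 := by
  refine ContinuousLinearMap.opNorm_le_bound _ zero_le_one fun x => ?_
  rw [one_mul]
  apply le_of_sq_le_sq _ (norm_nonneg _)
  have h1 : (∑ i, rankOne ℂ (v i) (w i)) x = ∑ i, (inner ℂ (w i) x) • v i := by
    simp [sum_apply]
  rw [h1]
  have h2 := hv.inner_sum (fun i => inner ℂ (w i) x) (fun i => inner ℂ (w i) x) Finset.univ
  have h3 := hw.sum_inner_products_le x (s := Finset.univ)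
  have h4 : ((‖∑ i, (inner ℂ (w i) x) • v i‖ ^ 2 : ℝ) : ℂ) = ((∑ i, ‖inner ℂ (w i) x‖ ^ 2 : ℝ) : ℂ) := by
    have := inner_self_eq_norm_sq_to_K (𝕜 := ℂ) (∑ i, (inner ℂ (w i) x) • v i)
    push_cast
    rw [h2] at this
    simp only [Complex.coe_algebraMap] at this
    rw [← this]
    refine Finset.sum_congr rfl fun i _ => ?_
    rw [RCLike.conj_mul]; simp
  have h5 := Complex.ofReal_injective h4
  rw [h5]; exact h3

end NestBasics


section ShiftConstruction

open InnerProductSpace ContinuousLinearMap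

variable {E F G : Type*} [NormedAddCommGroup E] [InnerProductSpace ℂ E] [CompleteSpace E]

/-- Brownian-type path. -/
def IsPath (ψ : ℝ → E) : Prop :=
  ∀ r ∈ Icc (0:ℝ) 1, ∀ r' ∈ Icc (0:ℝ) 1, inner ℂ (ψ r) (ψ r') = ((min r r' : ℝ) : ℂ)

noncomputable def ee (ψ : ℝ → E) (n j : ℕ) : E :=
  ((√(n:ℝ) : ℝ) : ℂ) • (ψ (((j + 1 : ℕ) : ℝ) / n) - ψ ((j : ℝ) / n))

noncomputable def RR (ψ : ℝ → E) (n : ℕ) : E →L[ℂ] E :=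
  ∑ i : Fin (n - 2), rankOne ℂ (ee ψ n i) (ee ψ n (i + 2))

lemma grid_mem {m n : ℕ} (h : m ≤ n) : (m : ℝ) / n ∈ Icc (0:ℝ) 1 := by
  refine ⟨by positivity, ?_⟩
  apply div_le_one_of_le₀ (by exact_mod_cast h) (by positivity)

lemma IsPath.zero {ψ : ℝ → E} (h : IsPath ψ) : ψ 0 = 0 := by
  have := h 0 (by simp) 0 (by simp)
  simpa using this

lemma IsPath.norm_sub {ψ : ℝ → E} (h : IsPath ψ) {r r' : ℝ} (hr : r ∈ Icc (0:ℝ) 1)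
    (hr' : r' ∈ Icc (0:ℝ) 1) : ‖ψ r - ψ r'‖ ^ 2 = |r - r'| := by
  have h1 : ((‖ψ r - ψ r'‖ ^ 2 : ℝ) : ℂ) = ((|r - r'| : ℝ) : ℂ) := by
    have := inner_self_eq_norm_sq_to_K (𝕜 := ℂ) (ψ r - ψ r')
    simp only [Complex.coe_algebraMap] at this
    push_cast
    rw [← this, inner_sub_left, inner_sub_right, inner_sub_right, h _ hr _ hr, h _ hr _ hr',
      h _ hr' _ hr, h _ hr' _ hr']
    rcases le_total r r' with h2 | h2
    · rw [abs_of_nonpos (by linarith)]; simp [h2]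
    · rw [abs_of_nonneg (by linarith)]; simp [h2]
  exact Complex.ofReal_injective h1

lemma IsPath.dist_le {ψ : ℝ → E} (h : IsPath ψ) {r r' d : ℝ} (hr : r ∈ Icc (0:ℝ) 1)
    (hr' : r' ∈ Icc (0:ℝ) 1) (hd : |r - r'| ≤ d) : ‖ψ r - ψ r'‖ ≤ √d := by
  apply Real.le_sqrt_of_sq_le
  rw [h.norm_sub hr hr']; exact hd

lemma IsPath.inner_ee_psi {ψ : ℝ → E} (h : IsPath ψ) {n j m : ℕ} (hj : j < n) (hm : m ≤ n) :
    inner ℂ (ee ψ n j) (ψ ((m : ℝ) / n)) = if j < m then (((√(n:ℝ))⁻¹ : ℝ) : ℂ) else 0 := by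
  have hn : (0:ℝ) < n := by exact_mod_cast (by omega : 0 < n)
  rw [ee, inner_smul_left, inner_sub_left, h _ (grid_mem hj) _ (grid_mem hm),
    h _ (grid_mem hj.le) _ (grid_mem hm)]
  split_ifs with h1
  · rw [min_eq_left (by gcongr; exact_mod_cast h1), min_eq_left (by gcongr)]
    rw [Complex.conj_ofReal, ← Complex.ofReal_sub, ← Complex.ofReal_mul]
    congr 1
    push_cast
    field_simp
    rw [Real.sq_sqrt hn.le]; ring
  · push Not at h1
    rw [min_eq_right (by gcongr; omega), min_eq_right (by gcongr)]
    simp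

lemma IsPath.inner_ee {ψ : ℝ → E} (h : IsPath ψ) {n j k : ℕ} (hj : j < n) (hk : k < n) :
    inner ℂ (ee ψ n j) (ee ψ n k) = if j = k then 1 else 0 := by
  have hn : (0:ℝ) < n := by exact_mod_cast (by omega : 0 < n)
  conv_lhs => rw [ee.eq_def ψ n k]
  rw [inner_smul_right, inner_sub_right, h.inner_ee_psi hj hk,
    h.inner_ee_psi hj hk.le]
  have : (((√(n:ℝ)) : ℝ) : ℂ) ≠ 0 := by
    simp only [ne_eq, Complex.ofReal_eq_zero]; positivity
  rcases lt_trichotomy j k with h1 | h1 | h1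
  · rw [if_pos (by omega), if_pos h1, if_neg (by omega)]; simp
  · rw [if_pos (by omega), if_neg (by omega), if_pos h1]; simp [this]
  · rw [if_neg (by omega), if_neg (by omega), if_neg (by omega)]; simp

lemma IsPath.ortho {ψ : ℝ → E} (h : IsPath ψ) (n d : ℕ) (hd : d ≤ 2) :
    Orthonormal ℂ (fun i : Fin (n - 2) => ee ψ n (i + d)) := by
  rw [orthonormal_iff_ite]
  intro i j
  have := i.2
  have := j.2
  rw [h.inner_ee (by omega) (by omega)]
  congr 1
  simp [Fin.ext_iff]

lemma IsPath.norm_RR {ψ : ℝ → E} (h : IsPath ψ) (n : ℕ) : ‖RR ψ n‖ ≤ 1 :=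
  norm_sum_rankOne_le (h.ortho n 0 (by norm_num)) (h.ortho n 2 le_rfl)

lemma adjoint_RR (ψ : ℝ → E) (n : ℕ) :
    adjoint (RR ψ n) = ∑ i : Fin (n - 2), rankOne ℂ (ee ψ n (i + 2)) (ee ψ n i) := by
  rw [RR, map_sum]
  simp only [adjoint_rankOne]

lemma tele (ψ : ℝ → E) (n d k : ℕ) :
    ∑ i ∈ Finset.range k, (ψ (((i + d + 1 : ℕ) : ℝ) / n) - ψ (((i + d : ℕ) : ℝ) / n))
      = ψ (((k + d : ℕ) : ℝ) / n) - ψ ((d : ℝ) / n) := by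
  induction k with
  | zero => simp
  | succ k ih =>
    rw [Finset.sum_range_succ, ih]
    have : k + 1 + d = k + d + 1 := by ring
    rw [this]; abel

lemma IsPath.term {ψ : ℝ → E} {n : ℕ} (hn : 0 < n) (j : ℕ) :
    (((√(n:ℝ))⁻¹ : ℝ) : ℂ) • ee ψ n j = ψ (((j + 1 : ℕ) : ℝ) / n) - ψ ((j : ℝ) / n) := by
  have : (0:ℝ) < n := by exact_mod_cast hn
  rw [ee, smul_smul, ← Complex.ofReal_mul, inv_mul_cancel₀ (by positivity)]
  simp

lemma IsPath.RR_psi {ψ : ℝ → E} (h : IsPath ψ) {n m : ℕ} (hn : 0 < n) (hm : m ≤ n) :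
    RR ψ n (ψ ((m : ℝ) / n)) = ψ (((m - 2 : ℕ) : ℝ) / n) := by
  have h1 : ∀ i : Fin (n - 2), rankOne ℂ (ee ψ n i) (ee ψ n (i + 2)) (ψ ((m : ℝ) / n)) =
      (fun i : ℕ => if i < m - 2 then ψ (((i + 1 : ℕ) : ℝ) / n) - ψ ((i : ℝ) / n) else 0) i := by
    intro i
    have := i.2
    simp only
    rw [rankOne_apply, h.inner_ee_psi (by omega) hm]
    by_cases hi : (i : ℕ) + 2 < m
    · rw [if_pos hi, if_pos (by omega), IsPath.term hn]
    · rw [if_neg hi, if_neg (by omega)]; simp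
  rw [RR, sum_apply, Finset.sum_congr rfl (fun i _ => h1 i), Fin.sum_univ_eq_sum_range
    (fun i : ℕ => if i < m - 2 then ψ (((i + 1 : ℕ) : ℝ) / n) - ψ ((i : ℝ) / n) else 0),
    ← Finset.sum_filter]
  have h2 : (Finset.range (n - 2)).filter (fun i => i < m - 2) = Finset.range (m - 2) := by
    ext i; simp; omega
  rw [h2]
  have := tele ψ n 0 (m - 2)
  simp only [add_zero] at this
  rw [this]
  simp [h.zero]

lemma IsPath.RRa_psi {ψ : ℝ → E} (h : IsPath ψ) {n m : ℕ} (hn : 2 ≤ n) (hm : m ≤ n) :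
    adjoint (RR ψ n) (ψ ((m : ℝ) / n)) =
      ψ (((min m (n - 2) + 2 : ℕ) : ℝ) / n) - ψ (((2 : ℕ) : ℝ) / n) := by
  have h1 : ∀ i : Fin (n - 2), rankOne ℂ (ee ψ n (i + 2)) (ee ψ n i) (ψ ((m : ℝ) / n)) =
      (fun i : ℕ => if i < m then ψ (((i + 2 + 1 : ℕ) : ℝ) / n) - ψ (((i + 2 : ℕ) : ℝ) / n)
        else 0) i := by
    intro i
    have := i.2
    simp only
    rw [rankOne_apply, h.inner_ee_psi (by omega) hm]
    by_cases hi : (i : ℕ) < m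
    · rw [if_pos hi, if_pos hi, IsPath.term (by omega)]
    · rw [if_neg hi, if_neg hi]; simp
  rw [adjoint_RR, sum_apply, Finset.sum_congr rfl (fun i _ => h1 i), Fin.sum_univ_eq_sum_range
    (fun i : ℕ => if i < m then ψ (((i + 2 + 1 : ℕ) : ℝ) / n) - ψ (((i + 2 : ℕ) : ℝ) / n) else 0),
    ← Finset.sum_filter]
  have h2 : (Finset.range (n - 2)).filter (fun i => i < m) = Finset.range (min m (n - 2)) := by
    ext i; simp; omega
  rw [h2, tele ψ n 2]

lemma grid_dist {n a b : ℕ} (hn : 0 < n) (h : a ≤ b + 2) (h' : b ≤ a + 2) :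
    |(a:ℝ)/n - (b:ℝ)/n| ≤ 4 / n := by
  have hn' : (0:ℝ) < n := by exact_mod_cast hn
  rw [← sub_div, abs_div, abs_of_pos hn']
  gcongr
  rw [abs_le]
  have h1 : (a:ℝ) ≤ b + 2 := by exact_mod_cast h
  have h2 : (b:ℝ) ≤ a + 2 := by exact_mod_cast h'
  constructor <;> linarith

lemma IsPath.bounds {ψ : ℝ → E} (h : IsPath ψ) {n : ℕ} (hn : 2 ≤ n) {r : ℝ}
    (hr : r ∈ Icc (0:ℝ) 1) :
    ‖RR ψ n (ψ r) - ψ r‖ ≤ 3 * √(4 / n) ∧ ‖(RR ψ n - adjoint (RR ψ n)) (ψ r)‖ ≤ 7 * √(4 / n) := by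
  have hn' : (0:ℝ) < n := by exact_mod_cast (by omega : 0 < n)
  set d := √(4 / (n:ℝ)) with hd
  set m := ⌊r * n⌋₊ with hmdef
  have hrn : 0 ≤ r * n := mul_nonneg hr.1 hn'.le
  have hm1 : (m : ℝ) ≤ r * n := Nat.floor_le hrn
  have hm2 : r * n < m + 1 := Nat.lt_floor_add_one _
  have hm : m ≤ n := by
    have : (m:ℝ) ≤ n := by nlinarith [hr.2]
    exact_mod_cast this
  have hr' : r = (r * n) / n := by field_simp
  have h0 : ‖ψ r - ψ ((m:ℝ)/n)‖ ≤ d := by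
    apply h.dist_le hr (grid_mem hm)
    rw [hr', ← sub_div, abs_div, abs_of_pos hn']
    gcongr
    rw [abs_le]; constructor <;> linarith
  have hR := h.norm_RR n
  have h1 : ‖RR ψ n (ψ r - ψ ((m:ℝ)/n))‖ ≤ d := ((RR ψ n).le_of_opNorm_le hR _).trans (by linarith)
  have hRa : ‖adjoint (RR ψ n)‖ ≤ 1 := by rw [LinearIsometryEquiv.norm_map]; exact hR
  have h1' : ‖adjoint (RR ψ n) (ψ r - ψ ((m:ℝ)/n))‖ ≤ d :=
    ((adjoint (RR ψ n)).le_of_opNorm_le hRa _).trans (by linarith)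
  have h2 : ‖RR ψ n (ψ ((m:ℝ)/n)) - ψ ((m:ℝ)/n)‖ ≤ d := by
    rw [h.RR_psi (by omega) hm]
    exact h.dist_le (grid_mem (by omega)) (grid_mem hm) (grid_dist (by omega) (by omega) (by omega))
  have h2' : ‖adjoint (RR ψ n) (ψ ((m:ℝ)/n)) - ψ ((m:ℝ)/n)‖ ≤ 2 * d := by
    rw [h.RRa_psi (by omega) hm]
    have h3 := h.dist_le (grid_mem (show min m (n-2) + 2 ≤ n by omega)) (grid_mem hm)
      (grid_dist (by omega) (by omega) (by omega))
    have h4 := h.dist_le (grid_mem hn) (grid_mem (Nat.zero_le n))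
      (grid_dist (by omega) (by omega) (by omega))
    simp only [Nat.cast_zero, zero_div, h.zero, sub_zero] at h4
    rw [sub_right_comm]
    refine (norm_sub_le _ _).trans ?_
    linarith
  have e1 : RR ψ n (ψ r) - ψ r = RR ψ n (ψ r - ψ ((m:ℝ)/n)) +
      (RR ψ n (ψ ((m:ℝ)/n)) - ψ ((m:ℝ)/n)) - (ψ r - ψ ((m:ℝ)/n)) := by
    rw [map_sub]; abel
  have e2 : adjoint (RR ψ n) (ψ r) - ψ r = adjoint (RR ψ n) (ψ r - ψ ((m:ℝ)/n)) +
      (adjoint (RR ψ n) (ψ ((m:ℝ)/n)) - ψ ((m:ℝ)/n)) - (ψ r - ψ ((m:ℝ)/n)) := by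
    rw [map_sub]; abel
  have f1 : ‖RR ψ n (ψ r) - ψ r‖ ≤ 3 * d := by
    rw [e1]
    refine (norm_sub_le _ _).trans ?_
    have := norm_add_le (RR ψ n (ψ r - ψ ((m:ℝ)/n))) (RR ψ n (ψ ((m:ℝ)/n)) - ψ ((m:ℝ)/n))
    linarith
  have f2 : ‖adjoint (RR ψ n) (ψ r) - ψ r‖ ≤ 4 * d := by
    rw [e2]
    refine (norm_sub_le _ _).trans ?_
    have := norm_add_le (adjoint (RR ψ n) (ψ r - ψ ((m:ℝ)/n)))
      (adjoint (RR ψ n) (ψ ((m:ℝ)/n)) - ψ ((m:ℝ)/n))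
    linarith
  refine ⟨f1, ?_⟩
  have e3 : (RR ψ n - adjoint (RR ψ n)) (ψ r) = (RR ψ n (ψ r) - ψ r) -
      (adjoint (RR ψ n) (ψ r) - ψ r) := by
    rw [sub_apply]; abel
  rw [e3]
  refine (norm_sub_le _ _).trans ?_
  linarith

lemma tendsto_sqrt_four_div : Tendsto (fun n : ℕ => √(4 / (n:ℝ))) atTop (𝓝 0) := by
  have : Tendsto (fun n : ℕ => 4 / (n:ℝ)) atTop (𝓝 0) := tendsto_const_div_atTop_nhds_zero_nat 4
  have h2 := (Real.continuous_sqrt.tendsto 0).comp this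
  rw [Real.sqrt_zero] at h2
  exact h2

lemma IsPath.ee_norm {ψ : ℝ → E} (h : IsPath ψ) {n l : ℕ} (hn : 2 ≤ n) {j : ℕ} (hj : j < l) :
    ‖(RR ψ n - adjoint (RR ψ n)) (ee ψ l j)‖ ≤ √l * (14 * √(4 / n)) := by
  rw [ee, map_smul, norm_smul, map_sub]
  have h1 := (h.bounds hn (grid_mem (show j + 1 ≤ l by omega))).2
  have h2 := (h.bounds hn (grid_mem hj.le)).2
  rw [Complex.norm_real, Real.norm_of_nonneg (Real.sqrt_nonneg _)]
  gcongr
  refine (norm_sub_le _ _).trans ?_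
  linarith

lemma IsPath.comm {ψ : ℝ → E} (h : IsPath ψ) (l : ℕ) :
    Tendsto (fun n => ‖(RR ψ n - adjoint (RR ψ n)) * (RR ψ l - adjoint (RR ψ l))‖)
      atTop (𝓝 0) := by
  have hlim : Tendsto (fun n : ℕ => ((l - 2 : ℕ) : ℝ) * (2 * (√l * (14 * √(4 / (n:ℝ)))))) atTop (𝓝 0) := by
    have := tendsto_sqrt_four_div.const_mul (((l - 2 : ℕ) : ℝ) * (2 * (√l * 14)))
    rw [mul_zero] at this
    refine this.congr fun n => ?_
    ring
  refine squeeze_zero' (Eventually.of_forall fun n => norm_nonneg _) ?_ hlim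
  filter_upwards [eventually_ge_atTop 2] with n hn
  set D := RR ψ n - adjoint (RR ψ n) with hD
  have hone : ∀ j, j < l → ‖ee ψ l j‖ = 1 := fun j hj => by
    have := h.inner_ee hj hj
    rw [if_pos rfl, inner_self_eq_norm_sq_to_K] at this
    have h2 : ‖ee ψ l j‖ ^ 2 = 1 := by
      simp only [Complex.coe_algebraMap] at this; exact_mod_cast this
    nlinarith [norm_nonneg (ee ψ l j)]
  have e : D * (RR ψ l - adjoint (RR ψ l)) = ∑ i : Fin (l - 2),
      (rankOne ℂ (D (ee ψ l i)) (ee ψ l (i + 2)) - rankOne ℂ (D (ee ψ l (i + 2))) (ee ψ l i)) := by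
    rw [adjoint_RR, RR, ← Finset.sum_sub_distrib, Finset.mul_sum]
    refine Finset.sum_congr rfl fun i _ => ?_
    rw [mul_sub]
    exact congr_arg₂ _ (comp_rankOne _ _ _) (comp_rankOne _ _ _)
  rw [e]
  refine (norm_sum_le _ _).trans ?_
  have : ∀ i ∈ (Finset.univ : Finset (Fin (l-2))), ‖rankOne ℂ (D (ee ψ l i)) (ee ψ l (i + 2)) -
      rankOne ℂ (D (ee ψ l (i + 2))) (ee ψ l i)‖ ≤ 2 * (√l * (14 * √(4 / (n:ℝ)))) := by
    intro i _
    have := i.2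
    refine (norm_sub_le _ _).trans ?_
    rw [norm_rankOne, norm_rankOne, hone _ (by omega), hone _ (by omega), mul_one, mul_one]
    have h1 := h.ee_norm hn (show (i:ℕ) < l by omega)
    have h2 := h.ee_norm hn (show (i:ℕ) + 2 < l by omega)
    linarith
  refine (Finset.sum_le_card_nsmul _ _ _ this).trans ?_
  simp

namespace PreNest

lemma norm_le (P : PreNest E) (t : ℝ) (x : E) : ‖P.N t x‖ ≤ ‖x‖ := by
  have h1 : inner ℂ (P.N t x) (P.N t x) = inner ℂ (P.N t x) x := by
    rw [P.sa, P.sa, P.idem]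
  have h2 := norm_inner_le_norm (𝕜 := ℂ) (P.N t x) x
  rw [← h1, inner_self_eq_norm_sq_to_K] at h2
  simp at h2
  by_contra h; push Not at h
  nlinarith [norm_nonneg x]

lemma exists_path (P : PreNest E) (x : E) (hx : ‖x‖ = 1) : ∃ τ : ℝ → ℝ,
    IsPath (fun r => P.N (τ r) x) ∧
    (∀ r ∈ Icc (0:ℝ) 1, ∀ r' ∈ Icc (0:ℝ) 1, r < r' → τ r < τ r') ∧ P.N (τ 1) x = x := by
  have hc : Continuous fun t => ‖P.N t x‖ ^ 2 := by have := P.cont x; fun_prop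
  have hm : ∀ s t, s ≤ t → ‖P.N s x‖ ^ 2 ≤ ‖P.N t x‖ ^ 2 := by
    intro s t hst
    rw [← P.mono' hst x]
    have := P.norm_le s (P.N t x)
    gcongr
  have hiv : ∀ r ∈ Icc (0:ℝ) 1, ∃ t, ‖P.N t x‖ ^ 2 = r := by
    intro r hr
    have := intermediate_value_Icc (zero_le_one (α := ℝ)) hc.continuousOn
    simp only [P.zero 0 le_rfl, P.one 1 le_rfl] at this
    simp [hx] at this
    obtain ⟨t, _, ht⟩ := this hr
    exact ⟨t, ht⟩
  choose! τ hτ using hiv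
  have hlt : ∀ r ∈ Icc (0:ℝ) 1, ∀ r' ∈ Icc (0:ℝ) 1, r < r' → τ r < τ r' := by
    intro r hr r' hr' h
    by_contra hh
    push Not at hh
    have := hm _ _ hh
    rw [hτ r hr, hτ r' hr'] at this
    linarith
  have hin : ∀ r ∈ Icc (0:ℝ) 1, ∀ r' ∈ Icc (0:ℝ) 1, r ≤ r' →
      inner ℂ (P.N (τ r) x) (P.N (τ r') x) = ((r : ℝ) : ℂ) := by
    intro r hr r' hr' h
    have h1 : τ r ≤ τ r' := by
      rcases h.lt_or_eq with h | h
      · exact (hlt r hr r' hr' h).le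
      · rw [h]
    rw [← P.mono (τ r) (τ r') h1 x, P.sa, P.idem, ← P.sa, P.mono _ _ h1]
    have h2 : inner ℂ (P.N (τ r) x) x = inner ℂ (P.N (τ r) x) (P.N (τ r) x) := by
      rw [P.sa, P.sa, P.idem]
    rw [h2, inner_self_eq_norm_sq_to_K]
    simp only [Complex.coe_algebraMap]
    exact_mod_cast hτ r hr
  refine ⟨τ, ?_, hlt, ?_⟩
  · intro r hr r' hr'
    rcases le_total r r' with h | h
    · rw [hin r hr r' hr' h, min_eq_left h]
    · rw [← inner_conj_symm, hin r' hr' r hr h, min_eq_right h, Complex.conj_ofReal]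
  · have h1 := hτ 1 (by simp)
    have h2 : ‖x - P.N (τ 1) x‖ ^ 2 = 0 := by
      rw [@norm_sub_sq ℂ]
      have h2 : inner ℂ x (P.N (τ 1) x) = inner ℂ (P.N (τ 1) x) (P.N (τ 1) x) := by
        rw [P.sa, P.idem]
      rw [h2, inner_self_eq_norm_sq_to_K]
      have : (RCLike.re (((‖P.N (τ 1) x‖ : ℝ) : ℂ) ^ 2)) = ‖P.N (τ 1) x‖ ^ 2 := by
        simp [← Complex.ofReal_pow]
      simp only [Complex.coe_algebraMap]
      rw [this, h1, hx]; norm_num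
    have h3 : x - P.N (τ 1) x = 0 := by simpa using h2
    exact (sub_eq_zero.mp h3).symm

lemma step1 (P : PreNest E) (x : E) (hx : ‖x‖ = 1) : ∃ R : ℕ → E →L[ℂ] E,
    (∀ n, P.TT (R n)) ∧ (∀ n, ‖R n‖ ≤ 1) ∧ Tendsto (fun n => ‖R n x - x‖) atTop (𝓝 0) ∧
    ∀ l, Tendsto (fun n => ‖(R n - adjoint (R n)) * (R l - adjoint (R l))‖) atTop (𝓝 0) := by
  obtain ⟨τ, hψ, hlt, h1⟩ := P.exists_path x hx
  set ψ : ℝ → E := fun r => P.N (τ r) x with hψd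
  refine ⟨RR ψ, fun n => ?_, hψ.norm_RR, ?_, hψ.comm⟩
  · apply TT.sum
    intro i _
    have hi := i.2
    have hn : (0:ℝ) < n := by exact_mod_cast (by omega : 0 < n)
    have g1 : ((i + 1 : ℕ) : ℝ) / n ∈ Icc (0:ℝ) 1 := grid_mem (by omega)
    have g0 : ((i : ℕ) : ℝ) / n ∈ Icc (0:ℝ) 1 := grid_mem (by omega)
    have g2 : ((i + 2 : ℕ) : ℝ) / n ∈ Icc (0:ℝ) 1 := grid_mem (by omega)
    have g3 : ((i + 2 + 1 : ℕ) : ℝ) / n ∈ Icc (0:ℝ) 1 := grid_mem (by omega)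
    have l01 := hlt _ g0 _ g1 (by gcongr; norm_num)
    have l12 := hlt _ g1 _ g2 (by gcongr; norm_num)
    have l23 := hlt _ g2 _ g3 (by gcongr; norm_num)
    refine TT.rankOne l12 ?_ ?_
    · rw [ee, map_smul, map_sub, hψd]
      simp only
      rw [P.idem, P.mono _ _ l01.le]
    · rw [ee, map_smul, map_sub, hψd]
      simp only
      rw [P.mono' l23.le, P.idem]; simp
  · have : Tendsto (fun n : ℕ => 3 * √(4 / (n:ℝ))) atTop (𝓝 0) := by
      simpa using tendsto_sqrt_four_div.const_mul 3
    refine squeeze_zero' (Eventually.of_forall fun n => norm_nonneg _) ?_ this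
    filter_upwards [eventually_ge_atTop 2] with n hn
    have := (hψ.bounds hn (r := 1) (by simp)).1
    rw [hψd] at this
    simp only at this
    rwa [h1] at this

end PreNest

end ShiftConstruction


section Cesaro

open InnerProductSpace ContinuousLinearMap

variable {E F G : Type*} [NormedAddCommGroup E] [InnerProductSpace ℂ E] [CompleteSpace E]

lemma norm_skew_sq {D : E →L[ℂ] E} (h : adjoint D = -D) : ‖D‖ ^ 2 = ‖D * D‖ := by
  have := CStarRing.norm_star_mul_self (x := D)
  rw [star_eq_adjoint, h, neg_mul, norm_neg] at this
  rw [this]; ring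

namespace PreNest

lemma step2_unit (P : PreNest E) (x : E) (hx : ‖x‖ = 1) {ε : ℝ} (hε : 0 < ε) :
    ∃ T, P.TT T ∧ ‖T‖ ≤ 1 ∧ ‖T - adjoint T‖ ≤ ε ∧ ‖x - T x‖ ≤ ε := by
  obtain ⟨R, hTT, hn, hlim, hcomm⟩ := P.step1 x hx
  set D : ℕ → E →L[ℂ] E := fun n => R n - adjoint (R n) with hD
  have hadj : ∀ k, adjoint (D k) = - D k := fun k => by simp [hD]
  have hDn : ∀ k, ‖D k‖ ≤ 2 := fun k => by
    refine (norm_sub_le _ _).trans ?_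
    rw [LinearIsometryEquiv.norm_map]; linarith [hn k]
  set ε' := ε ^ 2 / 2 with hε'
  have hε'p : 0 < ε' := by positivity
  let r : ℕ → ℕ → Prop := fun k l => ‖D k * D l‖ ≤ ε'
  have hsymm : ∀ k l, ‖D k * D l‖ = ‖D l * D k‖ := fun k l => by
    have : adjoint (D k * D l) = D l * D k := by
      change adjoint (D k ∘L D l) = _
      rw [adjoint_comp, hadj, hadj]
      ext z; simp
    rw [← this, LinearIsometryEquiv.norm_map]
  have : Std.Symm r := ⟨fun k l h => by change _ ≤ _; rw [hsymm]; exact h⟩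
  obtain ⟨f, hf1, hf2⟩ := exists_seq_of_forall_finset_exists' (fun k => ‖R k x - x‖ ≤ ε) r (by
    intro s _
    have h1 : ∀ᶠ n in atTop, ‖R n x - x‖ ≤ ε := hlim.eventually_le_const hε
    have h2 : ∀ᶠ n in atTop, ∀ l ∈ s, ‖D n * D l‖ ≤ ε' := by
      rw [Filter.eventually_all_finset]
      intro l _
      exact (hcomm l).eventually_le_const hε'p
    obtain ⟨n, h1, h2⟩ := (h1.and h2).exists
    exact ⟨n, h1, fun l hl => by change _ ≤ _; rw [hsymm]; exact h2 l hl⟩)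
  obtain ⟨n, hn8⟩ := exists_nat_gt (8 / ε ^ 2)
  have hnpos : (0:ℝ) < n := lt_trans (by positivity) hn8
  have hinv : ‖((n:ℂ)⁻¹)‖ = (n:ℝ)⁻¹ := by rw [norm_inv]; simp
  refine ⟨((n:ℂ)⁻¹) • ∑ i ∈ Finset.range n, R (f i), (TT.sum _ _ fun i _ => hTT _).smul _, ?_, ?_, ?_⟩
  · rw [norm_smul, hinv]
    have : ‖∑ i ∈ Finset.range n, R (f i)‖ ≤ n := by
      refine (norm_sum_le_of_le _ (fun i _ => hn (f i))).trans ?_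
      simp
    rw [inv_mul_le_iff₀ hnpos]; linarith
  · have e : ((n:ℂ)⁻¹) • ∑ i ∈ Finset.range n, R (f i) -
        adjoint (((n:ℂ)⁻¹) • ∑ i ∈ Finset.range n, R (f i)) =
        ((n:ℂ)⁻¹) • ∑ i ∈ Finset.range n, D (f i) := by
      rw [map_smulₛₗ, map_sum, hD]
      simp [Finset.sum_sub_distrib, smul_sub]
    rw [e, norm_smul, hinv]
    have hS : ‖∑ i ∈ Finset.range n, D (f i)‖ ^ 2 ≤ 4 * n + n ^ 2 * ε' := by
      rw [norm_skew_sq (by rw [map_sum]; simp [hadj]), Finset.sum_mul_sum]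
      have h1 : ∀ i ∈ Finset.range n, ‖∑ j ∈ Finset.range n, D (f i) * D (f j)‖ ≤ 4 + n * ε' := by
        intro i hi
        rw [← Finset.add_sum_erase _ _ hi]
        refine (norm_add_le _ _).trans (add_le_add ?_ ?_)
        · refine (norm_mul_le _ _).trans ?_
          nlinarith [hDn (f i), norm_nonneg (D (f i))]
        · have h2 : ∀ j ∈ (Finset.range n).erase i, ‖D (f i) * D (f j)‖ ≤ ε' := by
            intro j hj
            exact hf2 (Finset.ne_of_mem_erase hj).symm
          refine (norm_sum_le_of_le _ h2).trans ?_
          rw [Finset.sum_const, nsmul_eq_mul]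
          gcongr
          have := Finset.card_erase_le (s := Finset.range n) (a := i)
          simpa using this
      refine (norm_sum_le_of_le _ h1).trans ?_
      simp; ring_nf; rfl
    apply le_of_sq_le_sq _ hε.le
    rw [mul_pow, inv_pow, inv_mul_le_iff₀ (by positivity)]
    refine hS.trans ?_
    rw [div_lt_iff₀ (by positivity)] at hn8
    rw [hε']
    nlinarith
  · have e : x - (((n:ℂ)⁻¹) • ∑ i ∈ Finset.range n, R (f i)) x =
        ((n:ℂ)⁻¹) • ∑ i ∈ Finset.range n, (x - R (f i) x) := by
      rw [Finset.sum_sub_distrib, smul_sub]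
      simp only [Finset.sum_const, Finset.card_range, smul_apply, sum_apply]
      rw [← Nat.cast_smul_eq_nsmul ℂ, smul_smul, inv_mul_cancel₀ (by exact_mod_cast hnpos.ne')]
      simp
    rw [e, norm_smul, hinv, inv_mul_le_iff₀ hnpos]
    refine (norm_sum_le_of_le _ (fun i _ => (norm_sub_rev x _).le.trans (hf1 i))).trans ?_
    simp

lemma step2 (P : PreNest E) (x : E) {ε : ℝ} (hε : 0 < ε) :
    ∃ T, P.TT T ∧ ‖T‖ ≤ 1 ∧ ‖T - adjoint T‖ ≤ ε ∧ ‖x - T x‖ ≤ ε := by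
  by_cases hx : x = 0
  · exact ⟨0, TT.zero, by simp, by simp [hε.le], by simp [hx, hε.le]⟩
  have hx' : 0 < ‖x‖ := norm_pos_iff.mpr hx
  obtain ⟨T, h1, h2, h3, h4⟩ := P.step2_unit (((‖x‖⁻¹ : ℝ) : ℂ) • x)
    (by rw [norm_smul]; simp [hx'.ne']) (ε := min ε (ε / ‖x‖)) (by positivity)
  refine ⟨T, h1, h2, h3.trans (min_le_left _ _), ?_⟩
  have h5 := h4.trans (min_le_right _ _)
  rw [map_smul, ← smul_sub, norm_smul] at h5
  simp only [Complex.norm_real, norm_inv, norm_norm] at h5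
  rw [inv_mul_le_iff₀ hx'] at h5
  rwa [mul_div_cancel₀ _ hx'.ne'] at h5

lemma step3 (P : PreNest E) (l : List E) : ∃ c : ℝ, 0 ≤ c ∧ ∀ ε : ℝ, 0 < ε →
    ∃ T, P.TT T ∧ ‖1 - T‖ ≤ c ∧ ‖T - adjoint T‖ ≤ ε ∧ ∀ x ∈ l, ‖x - T x‖ ≤ ε := by
  induction l with
  | nil => exact ⟨1, zero_le_one, fun ε hε => ⟨0, TT.zero,
      by rw [sub_zero]; exact ContinuousLinearMap.norm_id_le, by simp [hε.le], by simp⟩⟩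
  | cons x l ih =>
    obtain ⟨c, hc, h⟩ := ih
    refine ⟨c * 2 * c, by positivity, fun ε hε => ?_⟩
    obtain ⟨T', a1, a2, a3, a4⟩ := h (ε / (5 * (c + 1) + 2 * c)) (by positivity)
    obtain ⟨T2, b1, b2, b3, b4⟩ := P.step2 (x - T' x) (ε := ε / ((c + 1) * (c + 1) * 8))
      (by positivity)
    set A := 1 - T' with hA
    set B := 1 - T2 with hB
    have hBn : ‖B‖ ≤ 2 := by
      refine (norm_sub_le _ _).trans ?_
      have : ‖(1 : E →L[ℂ] E)‖ ≤ 1 := ContinuousLinearMap.norm_id_le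
      linarith
    have e : 1 - A * B * A = T' + T' + T2 - T' * T' - T2 * T' - T' * T2 + T' * T2 * T' := by
      rw [hA, hB]; noncomm_ring
    refine ⟨1 - A * B * A, ?_, ?_, ?_, ?_⟩
    · rw [e]
      exact (((((a1.add a1).add b1).sub (a1.mul_mor a1.mor)).sub (b1.mul_mor a1.mor)).sub
        (a1.mul_mor b1.mor)).add ((a1.mul_mor b1.mor).mul_mor a1.mor)
    · rw [sub_sub_cancel]
      refine (norm_mul_le _ _).trans ?_
      have := norm_mul_le A B
      gcongr
      refine this.trans ?_
      gcongr
    · have hAs : A - star A = -(T' - adjoint T') := by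
        rw [hA, star_sub, star_one, star_eq_adjoint]; abel
      have hBs : B - star B = -(T2 - adjoint T2) := by
        rw [hB, star_sub, star_one, star_eq_adjoint]; abel
      have hAn : ‖A - star A‖ ≤ ε / (5 * (c + 1) + 2 * c) := by rw [hAs, norm_neg]; exact a3
      have hBn' : ‖B - star B‖ ≤ ε / ((c + 1) * (c + 1) * 8) := by rw [hBs, norm_neg]; exact b3
      have e2 : 1 - A * B * A - adjoint (1 - A * B * A) = -((A - star A) * B * A
          + star A * (B - star B) * A + star A * star B * (A - star A)) := by
        rw [← star_eq_adjoint, star_sub, star_one, star_mul, star_mul]; noncomm_ring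
      rw [e2, norm_neg]
      have n1 : ‖(A - star A) * B * A‖ ≤ ε / (5 * (c + 1) + 2 * c) * 2 * c := by
        refine (norm_mul_le _ _).trans ?_
        gcongr
        refine (norm_mul_le _ _).trans ?_
        gcongr
      have n2 : ‖star A * (B - star B) * A‖ ≤ c * (ε / ((c + 1) * (c + 1) * 8)) * c := by
        refine (norm_mul_le _ _).trans ?_
        gcongr
        refine (norm_mul_le _ _).trans ?_
        rw [norm_star]
        gcongr
      have n3 : ‖star A * star B * (A - star A)‖ ≤ c * 2 * (ε / (5 * (c + 1) + 2 * c)) := by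
        refine (norm_mul_le _ _).trans ?_
        gcongr
        refine (norm_mul_le _ _).trans ?_
        rw [norm_star, norm_star]
        gcongr
      have q1 : ε / (5 * (c + 1) + 2 * c) * 2 * c ≤ ε * (2 / 7) := by
        rw [mul_assoc, div_mul_eq_mul_div, div_le_iff₀ (by positivity)]
        nlinarith
      have q2 : c * (ε / ((c + 1) * (c + 1) * 8)) * c ≤ ε / 8 := by
        rw [mul_right_comm, mul_div_assoc', div_le_iff₀ (by positivity)]
        nlinarith [mul_nonneg hc hε.le]
      have := norm_add_le ((A - star A) * B * A + star A * (B - star B) * A)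
        (star A * star B * (A - star A))
      have := norm_add_le ((A - star A) * B * A) (star A * (B - star B) * A)
      nlinarith
    · intro y hy
      have e3 : y - (1 - A * B * A) y = A (B (A y)) := by simp
      rw [e3]
      rcases List.mem_cons.mp hy with rfl | hy
      · have : ‖B (A y)‖ ≤ ε / ((c + 1) * (c + 1) * 8) := by
          simpa [hB, hA] using b4
        refine (A.le_of_opNorm_le a2 _).trans ?_
        refine (mul_le_mul_of_nonneg_left this hc).trans ?_
        rw [mul_div_assoc', div_le_iff₀ (by positivity)]
        nlinarith [mul_nonneg hc hε.le, mul_nonneg (mul_nonneg hc hc) hε.le]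
      · have h1 : ‖A y‖ ≤ ε / (5 * (c + 1) + 2 * c) := by simpa [hA] using a4 y hy
        have h2 : ‖B (A y)‖ ≤ 2 * (ε / (5 * (c + 1) + 2 * c)) :=
          (B.le_of_opNorm_le hBn _).trans (by gcongr)
        refine (A.le_of_opNorm_le a2 _).trans ?_
        refine (mul_le_mul_of_nonneg_left h2 hc).trans ?_
        rw [mul_div_assoc', mul_div_assoc', div_le_iff₀ (by positivity)]
        nlinarith

lemma resolvent {P : PreNest E} {T : E →L[ℂ] E} (hT : P.TT T) (c : ℂ) :
    ∃ b : E →L[ℂ] E, (1 - c • T) * b = 1 ∧ b * (1 - c • T) = 1 ∧ Mor P P b ∧ P.TT (1 - b) := by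
  obtain ⟨δ, hδ, hroom⟩ := (hT.smul c).2
  obtain ⟨n, hn⟩ := hroom.nilp hδ
  have h1 : (1 - c • T) * ∑ i ∈ Finset.range (n + 1), (c • T) ^ i = 1 := by
    rw [mul_neg_geom_sum, hn, sub_zero]
  have h2 : (∑ i ∈ Finset.range (n + 1), (c • T) ^ i) * (1 - c • T) = 1 := by
    rw [geom_sum_mul_neg, hn, sub_zero]
  have hpow : ∀ i : ℕ, Mor P P ((c • T) ^ i) := by
    intro i
    induction i with
    | zero => rw [pow_zero]; exact Mor.one
    | succ i ih => rw [pow_succ]; exact ih.mul (hT.smul c).mor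
  have h3 : ∀ m : ℕ, Mor P P (∑ i ∈ Finset.range m, (c • T) ^ i) := by
    intro m
    induction m with
    | zero => rw [Finset.sum_range_zero]; exact TT.zero.mor
    | succ m ih => rw [Finset.sum_range_succ]; exact ih.add (hpow m)
  refine ⟨_, h1, h2, h3 _, ?_⟩
  have h4 : 1 - ∑ i ∈ Finset.range (n + 1), (c • T) ^ i =
      (-1 : ℂ) • ((c • T) * ∑ i ∈ Finset.range (n + 1), (c • T) ^ i) := by
    have := h1
    rw [sub_mul, one_mul] at this
    conv_lhs => rw [← this]
    rw [neg_one_smul]; abel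
  rw [h4]
  exact ((hT.smul c).mul_mor (h3 _)).smul _

lemma resolvent_bound {T : E →L[ℂ] E} {κ : ℝ} (hκ : |κ| * ‖T - adjoint T‖ ≤ 1) {b : E →L[ℂ] E}
    (hb : (1 - (κ * Complex.I : ℂ) • T) * b = 1) : ‖b‖ ≤ 2 := by
  have key : ∀ z : E, ‖z‖ ≤ 2 * ‖(1 - (κ * Complex.I : ℂ) • T) z‖ := by
    intro z
    have h1 : (inner ℂ z ((1 - (κ * Complex.I : ℂ) • T) z)).re =
        ‖z‖ ^ 2 + κ * (inner ℂ z (T z)).im := by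
      have h0 : inner ℂ z z = ((‖z‖ ^ 2 : ℝ) : ℂ) := by
        rw [inner_self_eq_norm_sq_to_K]; simp
      simp only [sub_apply, one_apply_eq_self, smul_apply, inner_sub_right, inner_smul_right, h0]
      rw [Complex.sub_re, Complex.ofReal_re, mul_assoc, Complex.re_ofReal_mul, Complex.I_mul_re]
      ring
    have h2 : |2 * (inner ℂ z (T z)).im| ≤ ‖T - adjoint T‖ * ‖z‖ ^ 2 := by
      have h3 : (inner ℂ z ((T - adjoint T) z)) = ((2 * (inner ℂ z (T z)).im : ℝ) : ℂ) * Complex.I := by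
        rw [sub_apply, inner_sub_right, adjoint_inner_right, ← inner_conj_symm (T z) z,
          Complex.sub_conj]

      have h4 := norm_inner_le_norm (𝕜 := ℂ) z ((T - adjoint T) z)
      rw [h3, norm_mul, Complex.norm_I, mul_one, Complex.norm_real, Real.norm_eq_abs] at h4
      refine h4.trans ?_
      have := (T - adjoint T).le_opNorm z
      nlinarith [norm_nonneg z]
    have h3 : |κ * (inner ℂ z (T z)).im| ≤ ‖z‖ ^ 2 / 2 := by
      rw [abs_mul]
      rw [abs_mul, abs_two] at h2
      have := mul_le_mul_of_nonneg_left h2 (abs_nonneg κ)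
      nlinarith [mul_le_mul_of_nonneg_right hκ (sq_nonneg ‖z‖)]
    have h4 : (inner ℂ z ((1 - (κ * Complex.I : ℂ) • T) z)).re ≤
        ‖z‖ * ‖(1 - (κ * Complex.I : ℂ) • T) z‖ :=
      (Complex.re_le_norm _).trans (norm_inner_le_norm _ _)
    rw [h1] at h4
    have h5 := neg_le_of_abs_le h3
    by_contra hh
    push Not at hh
    have hz : 0 < ‖z‖ := lt_of_le_of_lt (by positivity) hh
    nlinarith
  refine ContinuousLinearMap.opNorm_le_bound _ (by norm_num) fun y => ?_
  have h1 := key (b y)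
  have h2 : (1 - (κ * Complex.I : ℂ) • T) (b y) = y := by
    rw [← mul_apply_eq_comp, hb]; rfl
  rwa [h2] at h1

lemma step4 (P : PreNest E) (l : List E) {η : ℝ} (hη : 0 < η) : ∃ b b' : E →L[ℂ] E,
    P.TT (1 - b) ∧ P.TT (1 - b') ∧ b + b' = (2:ℂ) • (b' * b) ∧ ‖b‖ ≤ 2 ∧ ‖b'‖ ≤ 2 ∧
    ‖b' - adjoint b‖ ≤ η ∧ ∀ x ∈ l, ‖b x‖ ≤ η ∧ ‖adjoint b' x‖ ≤ η := by
  obtain ⟨M, hM1, hM⟩ : ∃ M : ℝ, 1 ≤ M ∧ ∀ x ∈ l, ‖x‖ ≤ M := by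
    clear hη
    induction l with
    | nil => exact ⟨1, le_rfl, by simp⟩
    | cons x l ih =>
      obtain ⟨M, h1, h2⟩ := ih
      refine ⟨max ‖x‖ M, le_max_of_le_right h1, fun y hy => ?_⟩
      rcases List.mem_cons.mp hy with rfl | hy
      · exact le_max_left _ _
      · exact le_max_of_le_right (h2 y hy)
  obtain ⟨c0, _, h3⟩ := P.step3 l
  have hM0 : 0 < M := by linarith
  set κ : ℝ := 12 * M / η with hκ
  have hκ0 : 0 < κ := by positivity
  set ε : ℝ := min κ⁻¹ (min (η / 8) (η / (8 * κ * M))) with hεd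
  have hε : 0 < ε := by positivity
  have hε1 : κ * ε ≤ 1 := by
    have : ε ≤ κ⁻¹ := min_le_left _ _
    calc κ * ε ≤ κ * κ⁻¹ := by gcongr
      _ = 1 := mul_inv_cancel₀ hκ0.ne'
  have hε2 : ε ≤ η / 8 := (min_le_right _ _).trans (min_le_left _ _)
  have hε3 : 4 * κ * ε * M ≤ η / 2 := by
    have : ε ≤ η / (8 * κ * M) := (min_le_right _ _).trans (min_le_right _ _)
    rw [le_div_iff₀ (by positivity)] at this
    linarith
  obtain ⟨T, hT, _, hTs, hTx⟩ := h3 ε hε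
  obtain ⟨b, hb1, hb2, _, hbT⟩ := resolvent hT (κ * Complex.I)
  obtain ⟨b', hb1', hb2', _, hbT'⟩ := resolvent hT (((-κ : ℝ) : ℂ) * Complex.I)
  have nb : ‖b‖ ≤ 2 := resolvent_bound (by rw [abs_of_pos hκ0]; nlinarith) hb1
  have nb' : ‖b'‖ ≤ 2 := resolvent_bound (by rw [abs_neg, abs_of_pos hκ0]; nlinarith) hb1'
  set c : ℂ := κ * Complex.I with hc
  have hcn : ‖c‖ = κ := by rw [hc, norm_mul]; simp [abs_of_pos hκ0]
  have hc' : ((-κ : ℝ) : ℂ) * Complex.I = -c := by rw [hc]; push_cast; ring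
  rw [hc'] at hb1' hb2'
  have hdiff : b' - adjoint b = c • (b' * (adjoint T - T) * adjoint b) := by
    have e1 : (1 - (-c) • adjoint T) * adjoint b = 1 := by
      have := congr_arg star hb2
      rw [star_mul, star_one, star_sub, star_one, star_smul, star_eq_adjoint, star_eq_adjoint] at this
      convert this using 4
      rw [hc]; simp
    calc b' - adjoint b = b' * ((1 - (-c) • adjoint T) * adjoint b) -
          (b' * (1 - (-c) • T)) * adjoint b := by rw [e1, hb2']; simp
      _ = _ := by
        simp only [neg_smul, sub_neg_eq_add, mul_sub, sub_mul, mul_add, add_mul, mul_one, one_mul,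
          mul_smul_comm, smul_mul_assoc, smul_sub, mul_assoc]
        abel
  have ndiff : ‖b' - adjoint b‖ ≤ 4 * κ * ε := by
    rw [hdiff, norm_smul, hcn]
    have h1 := norm_mul_le (b' * (adjoint T - T)) (adjoint b)
    have h2 := norm_mul_le b' (adjoint T - T)
    rw [LinearIsometryEquiv.norm_map] at h1
    rw [norm_sub_rev] at h2
    have h5 : ‖b' * (adjoint T - T)‖ ≤ 2 * ε := h2.trans (by gcongr)
    have h6 : ‖b' * (adjoint T - T) * adjoint b‖ ≤ (2 * ε) * 2 := h1.trans (by gcongr)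
    nlinarith
  have hbx : ∀ x ∈ l, ‖b x‖ ≤ η / 2 := by
    intro x hx
    have h1 : c • b (T x) = b x - x := by
      have : (b * (1 - c • T)) x = x := by rw [hb2]; rfl
      simp only [mul_apply_eq_comp, sub_apply, one_apply_eq_self, smul_apply, map_sub, map_smul] at this
      exact eq_sub_of_add_eq ((add_comm _ _).trans (sub_eq_iff_eq_add.mp this).symm)
    have h2 : κ * ‖b (T x)‖ ≤ 3 * M := by
      rw [← hcn, ← norm_smul, h1]
      refine (norm_sub_le _ _).trans ?_
      have := b.le_of_opNorm_le nb x
      linarith [hM x hx]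
    have h4 : ‖b (T x)‖ ≤ η / 4 := by
      rw [hκ] at h2
      have : 12 * M * ‖b (T x)‖ ≤ 3 * M * η := by
        rw [div_mul_eq_mul_div, div_le_iff₀ hη] at h2; exact h2
      nlinarith
    have h5 : b x = b (T x) + b (x - T x) := by rw [map_sub]; abel
    rw [h5]
    refine (norm_add_le _ _).trans ?_
    have := b.le_of_opNorm_le nb (x - T x)
    linarith [hTx x hx]
  refine ⟨b, b', hbT, hbT', ?_, nb, nb', ?_, ?_⟩
  · have : b' * ((1 - c • T) + (1 - (-c) • T)) * b = b + b' := by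
      rw [mul_add, add_mul, mul_assoc, hb1, hb2', mul_one, one_mul, add_comm]
    rw [← this]
    have h2 : (1 - c • T) + (1 - (-c) • T) = (2:ℂ) • (1 : E →L[ℂ] E) := by
      rw [neg_smul, two_smul]; abel
    rw [h2]; simp
  · refine ndiff.trans ?_
    nlinarith [mul_pos hκ0 hε]
  · intro x hx
    refine ⟨by linarith [hbx x hx], ?_⟩
    have h1 : adjoint b' x = b x + (adjoint (b' - adjoint b)) x := by
      rw [map_sub, adjoint_adjoint, sub_apply]; abel
    rw [h1]
    refine (norm_add_le _ _).trans ?_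
    have h2 := (adjoint (b' - adjoint b)).le_opNorm x
    rw [LinearIsometryEquiv.norm_map] at h2
    have h4 : ‖b' - adjoint b‖ * ‖x‖ ≤ 4 * κ * ε * M := by
      gcongr
      exact hM x hx
    linarith [hbx x hx]

/-- The version used in the recursion. -/
lemma step4' (P : PreNest E) (l : List E) {η : ℝ} (hη : 0 < η) {a a' : E →L[ℂ] E}
    (ha : a ∈ FR E E) (ha' : a' ∈ FR E E) : ∃ b b' : E →L[ℂ] E,
    P.TT (1 - b) ∧ P.TT (1 - b') ∧ b + b' = (2:ℂ) • (b' * b) ∧ ‖b‖ ≤ 2 ∧ ‖b'‖ ≤ 2 ∧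
    ‖b' - adjoint b‖ ≤ η ∧ (∀ x ∈ l, ‖b x‖ ≤ η) ∧ ‖b * a‖ ≤ η ∧ ‖a' * b'‖ ≤ η := by
  obtain ⟨l1, C1, hC1, h1⟩ := FR.list ha
  obtain ⟨l2, C2, hC2, h2⟩ := FR.list (FR.adjoint_mem ha')
  set η' := η / (1 + C1 + C2) with hη'
  have hp : 0 < η' := by positivity
  have hle : η' ≤ η := by
    rw [hη', div_le_iff₀ (by positivity)]; nlinarith
  obtain ⟨b, b', t1, t2, t3, t4, t5, t6, t7⟩ := P.step4 (l ++ (l1 ++ l2)) hp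
  have hC : ∀ C, 0 ≤ C → C ≤ 1 + C1 + C2 → C * η' ≤ η := by
    intro C _ h
    rw [hη', mul_div_assoc', div_le_iff₀ (by positivity)]; nlinarith
  refine ⟨b, b', t1, t2, t3, t4, t5, t6.trans hle, fun x hx => (t7 x (by simp [hx])).1.trans hle,
    ?_, ?_⟩
  · exact (h1 b η' hp.le fun x hx => (t7 x (by simp [hx])).1).trans (hC C1 hC1 (by linarith))
  · have := (h2 (adjoint b') η' hp.le fun x hx => (t7 x (by simp [hx])).2).trans
      (hC C2 hC2 (by linarith))
    rw [← adjoint_comp, LinearIsometryEquiv.norm_map] at this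
    exact this

end PreNest

end Cesaro


section Sequences

open InnerProductSpace ContinuousLinearMap

variable {E F G : Type*} [NormedAddCommGroup E] [InnerProductSpace ℂ E] [CompleteSpace E]
  [NormedAddCommGroup F] [InnerProductSpace ℂ F] [CompleteSpace F]

namespace PreNest

lemma step5a (P : PreNest E) (x : ℕ → E) {η : ℕ → ℝ} (hη0 : ∀ n, 0 < η n) :
    ∃ b b' : ℕ → E →L[ℂ] E, b 0 = 1 ∧ b' 0 = 1 ∧ (∀ n, P.TT (1 - b n)) ∧ (∀ n, P.TT (1 - b' n)) ∧
    (∀ n, b (n + 1) + b' (n + 1) = (2:ℂ) • (b' (n + 1) * b (n + 1))) ∧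
    (∀ n, ‖b n‖ ≤ 2) ∧ (∀ n, ‖b' n‖ ≤ 2) ∧ (∀ n, ‖b' n - adjoint (b n)‖ ≤ η n) ∧
    (∀ n, ∀ i < n + 1, ‖b (n + 1) (x i)‖ ≤ η (n + 1)) ∧
    (∀ n, ‖b (n + 1) * (1 - b n)‖ ≤ η (n + 1)) ∧
    (∀ n, ‖(1 - b' n) * b' (n + 1)‖ ≤ η (n + 1)) := by
  let S := {p : (E →L[ℂ] E) × (E →L[ℂ] E) // P.TT (1 - p.1) ∧ P.TT (1 - p.2)}
  have hstep : ∀ (n : ℕ) (s : S), ∃ t : S, t.1.1 + t.1.2 = (2:ℂ) • (t.1.2 * t.1.1) ∧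
      ‖t.1.1‖ ≤ 2 ∧ ‖t.1.2‖ ≤ 2 ∧ ‖t.1.2 - adjoint t.1.1‖ ≤ η (n + 1) ∧
      (∀ i < n + 1, ‖t.1.1 (x i)‖ ≤ η (n + 1)) ∧ ‖t.1.1 * (1 - s.1.1)‖ ≤ η (n + 1) ∧
      ‖(1 - s.1.2) * t.1.2‖ ≤ η (n + 1) := by
    intro n s
    obtain ⟨b, b', h1, h2, h3, h4, h5, h6, h7, h8, h9⟩ :=
      P.step4' ((List.range (n + 1)).map x) (hη0 (n + 1)) s.2.1.1 s.2.2.1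
    exact ⟨⟨(b, b'), h1, h2⟩, h3, h4, h5, h6, fun i hi => h7 _ (by simp; exact ⟨i, by omega, rfl⟩), h8, h9⟩
  choose nxt hnxt using hstep
  let s0 : S := ⟨(1, 1), by simpa using TT.zero, by simpa using TT.zero⟩
  let sq : ℕ → S := fun n => Nat.rec s0 nxt n
  let b : ℕ → E →L[ℂ] E := fun n => (sq n).1.1
  let b' : ℕ → E →L[ℂ] E := fun n => (sq n).1.2
  have b0 : b 0 = 1 := rfl
  have b0' : b' 0 = 1 := rfl
  have hone : ‖(1 : E →L[ℂ] E)‖ ≤ 1 := ContinuousLinearMap.norm_id_le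
  have ta : ∀ n, P.TT (1 - b n) := fun n => (sq n).2.1
  have ta' : ∀ n, P.TT (1 - b' n) := fun n => (sq n).2.2
  have hn := fun n => hnxt n (sq n)
  have q1 : ∀ n, b (n + 1) + b' (n + 1) = (2:ℂ) • (b' (n + 1) * b (n + 1)) := fun n => (hn n).1
  have q2 : ∀ n, ‖b n‖ ≤ 2 := fun n => by
    cases n with
    | zero => rw [b0]; linarith
    | succ n => exact (hn n).2.1
  have q3 : ∀ n, ‖b' n‖ ≤ 2 := fun n => by
    cases n with
    | zero => rw [b0']; linarith
    | succ n => exact (hn n).2.2.1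
  have q4 : ∀ n, ‖b' n - adjoint (b n)‖ ≤ η n := fun n => by
    cases n with
    | zero =>
      rw [b0, b0', ← star_eq_adjoint, star_one, sub_self, norm_zero]; exact (hη0 0).le
    | succ n => exact (hn n).2.2.2.1
  have q5 : ∀ n, ∀ i < n + 1, ‖b (n + 1) (x i)‖ ≤ η (n + 1) := fun n => (hn n).2.2.2.2.1
  have q6 : ∀ n, ‖b (n + 1) * (1 - b n)‖ ≤ η (n + 1) := fun n => (hn n).2.2.2.2.2.1
  have q7 : ∀ n, ‖(1 - b' n) * b' (n + 1)‖ ≤ η (n + 1) := fun n => (hn n).2.2.2.2.2.2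
  exact ⟨b, b', b0, b0', ta, ta', q1, q2, q3, q4, q5, q6, q7⟩

set_option maxHeartbeats 1000000 in
lemma step5 (P : PreNest E) (x : ℕ → E) (hx : ∀ y, y ∈ closure (Submodule.span ℂ (range x) : Set E))
    {c : ℝ} (hc : 0 < c) (hc1 : c ≤ 1) : ∃ L L' b b' e : ℕ → E →L[ℂ] E,
    (∀ n, P.TT (L n)) ∧ (∀ n, P.TT (L' n)) ∧ (∀ n, ‖L' n - adjoint (L n)‖ ≤ c * (1 / 2) ^ n) ∧
    (∀ n, e n ∈ FR E E) ∧ (∀ n, ‖e n‖ ≤ c * (1 / 2) ^ n) ∧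
    (∀ m, ∑ n ∈ Finset.range m, L' n * L n = 1 - b' m * b m - ∑ n ∈ Finset.range m, e n) ∧
    (∀ m, ‖b m‖ ≤ 2) ∧ (∀ m, ‖b' m‖ ≤ 2) ∧ ∀ y, Tendsto (fun m => b m y) atTop (𝓝 0) := by
  set η : ℕ → ℝ := fun n => c / 5 * (1 / 2) ^ n with hη
  have hη0 : ∀ n, 0 < η n := fun n => by positivity
  have hη1 : ∀ n, η n ≤ 1 / 5 := fun n => by
    have : ((1:ℝ) / 2) ^ n ≤ 1 := pow_le_one₀ (by norm_num) (by norm_num)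
    have h0 : (0:ℝ) < (1 / 2) ^ n := by positivity
    simp only [hη]; nlinarith
  have hηs : ∀ n, η (n + 1) = η n / 2 := fun n => by simp only [hη]; rw [pow_succ]; ring
  obtain ⟨b, b', b0, b0', ta, ta', q1, q2, q3, q4, q5, q6, q7⟩ := P.step5a x hη0
  have hone : ‖(1 : E →L[ℂ] E)‖ ≤ 1 := ContinuousLinearMap.norm_id_le
  have mb : ∀ n, Mor P P (b n) := fun n => by
    have := Mor.one.sub (ta n).mor
    rwa [sub_sub_cancel] at this
  have mb' : ∀ n, Mor P P (b' n) := fun n => by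
    have := Mor.one.sub (ta' n).mor
    rwa [sub_sub_cancel] at this
  refine ⟨fun n => (1 - b (n + 1)) * b n, fun n => b' n * (1 - b' (n + 1)), b, b',
    fun n => b' n * b' (n + 1) * (b (n + 1) * b n) - b' (n + 1) * b (n + 1),
    fun n => (ta _).mul_mor (mb n), fun n => (ta' _).mor_mul (mb' n), ?_, ?_, ?_, ?_, q2, q3, ?_⟩
  · intro n
    have e : b' n * (1 - b' (n + 1)) - adjoint ((1 - b (n + 1)) * b n) =
        (b' n - adjoint (b n)) * (1 - b' (n + 1)) - adjoint (b n) * (b' (n + 1) - adjoint (b (n + 1))) := by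
      rw [← star_eq_adjoint, ← star_eq_adjoint, ← star_eq_adjoint, star_mul, star_sub, star_one]
      noncomm_ring
    simp only
    rw [e]
    have n1 : ‖(b' n - adjoint (b n)) * (1 - b' (n + 1))‖ ≤ η n * 3 := by
      refine (norm_mul_le _ _).trans ?_
      have := norm_sub_le 1 (b' (n + 1))
      have := q3 (n + 1)
      have := hη0 n
      gcongr
      · exact q4 n
      · linarith
    have n2 : ‖adjoint (b n) * (b' (n + 1) - adjoint (b (n + 1)))‖ ≤ 2 * η (n + 1) := by
      refine (norm_mul_le _ _).trans ?_
      rw [LinearIsometryEquiv.norm_map]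
      gcongr
      · exact q2 n
      · exact q4 _
    refine (norm_sub_le _ _).trans ?_
    rw [hηs] at n2
    have : η n = c / 5 * (1 / 2) ^ n := rfl
    have h0 := hη0 n
    linarith
  all_goals have key : ∀ n, b' n * b' (n + 1) * (b (n + 1) * b n) - b' (n + 1) * b (n + 1) =
      ((1 - b' n) * b' (n + 1)) * (b (n + 1) * (1 - b n)) - b' (n + 1) * (b (n + 1) * (1 - b n)) -
      ((1 - b' n) * b' (n + 1)) * b (n + 1) := fun n => by noncomm_ring
  · intro n
    simp only
    rw [key]
    refine sub_mem (sub_mem ?_ ?_) ?_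
    · exact FR.mul_left (FR.mul_left (ta n).1 _) _
    · exact FR.mul_left (FR.mul_left (ta n).1 _) _
    · exact FR.mul_right (FR.mul_right (ta' n).1 _) _
  · intro n
    simp only
    rw [key]
    have n1 : ‖((1 - b' n) * b' (n + 1)) * (b (n + 1) * (1 - b n))‖ ≤ η (n + 1) * 1 := by
      refine (norm_mul_le _ _).trans ?_
      have := hη1 (n + 1)
      have := hη0 (n + 1)
      gcongr
      · exact q7 n
      · exact (q6 n).trans (by linarith)
    have n2 : ‖b' (n + 1) * (b (n + 1) * (1 - b n))‖ ≤ 2 * η (n + 1) := by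
      refine (norm_mul_le _ _).trans ?_
      gcongr
      · exact q3 _
      · exact q6 n
    have n3 : ‖((1 - b' n) * b' (n + 1)) * b (n + 1)‖ ≤ η (n + 1) * 2 := by
      refine (norm_mul_le _ _).trans ?_
      have := hη0 (n + 1)
      gcongr
      · exact q7 _
      · exact q2 _
    have h1 := norm_sub_le (((1 - b' n) * b' (n + 1)) * (b (n + 1) * (1 - b n)) -
      b' (n + 1) * (b (n + 1) * (1 - b n))) (((1 - b' n) * b' (n + 1)) * b (n + 1))
    have h2 := norm_sub_le (((1 - b' n) * b' (n + 1)) * (b (n + 1) * (1 - b n)))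
      (b' (n + 1) * (b (n + 1) * (1 - b n)))
    rw [hηs] at n1 n2 n3
    have : η n = c / 5 * (1 / 2) ^ n := rfl
    have h0 := hη0 n
    linarith
  · intro m
    induction m with
    | zero => simp [b0, b0']
    | succ m ih =>
      rw [Finset.sum_range_succ, Finset.sum_range_succ, ih]
      have h1 : (1 - b' (m + 1)) * (1 - b (m + 1)) = 1 - b' (m + 1) * b (m + 1) := by
        have := q1 m
        rw [two_smul] at this
        have e : (1 - b' (m + 1)) * (1 - b (m + 1)) =
          1 - (b (m + 1) + b' (m + 1)) + b' (m + 1) * b (m + 1) := by noncomm_ring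
        rw [e, this]; abel
      have h2 : b' m * (1 - b' (m + 1)) * ((1 - b (m + 1)) * b m) =
          b' m * (1 - b' (m + 1) * b (m + 1)) * b m := by rw [← h1]; noncomm_ring
      rw [h2]
      noncomm_ring
  · intro y
    have hη_lim : Tendsto η atTop (𝓝 0) := by
      have := (tendsto_pow_atTop_nhds_zero_of_lt_one (r := (1:ℝ)/2) (by norm_num) (by norm_num)).const_mul (c/5)
      simpa [hη] using this
    have hspan : ∀ z ∈ Submodule.span ℂ (range x), Tendsto (fun m => b m z) atTop (𝓝 0) := by
      intro z hz
      induction hz using Submodule.span_induction with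
      | mem z h =>
        obtain ⟨i, rfl⟩ := h
        rw [tendsto_zero_iff_norm_tendsto_zero]
        refine squeeze_zero' (Eventually.of_forall fun _ => norm_nonneg _) ?_ hη_lim
        filter_upwards [eventually_ge_atTop (i + 1)] with m hm
        obtain ⟨k, rfl⟩ : ∃ k, m = k + 1 := ⟨m - 1, by omega⟩
        exact q5 k i (by omega)
      | zero => simp
      | add u v _ _ hu hv => simpa using hu.add hv
      | smul a u _ hu => simpa using hu.const_smul a
    rw [Metric.tendsto_atTop]
    intro ε hε
    obtain ⟨z, hz, hyz⟩ := Metric.mem_closure_iff.mp (hx y) (ε / 4) (by positivity)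
    obtain ⟨M, hM⟩ := Metric.tendsto_atTop.mp (hspan z hz) (ε / 2) (by positivity)
    refine ⟨M, fun m hm => ?_⟩
    have h1 := hM m hm
    rw [dist_zero_right] at h1 ⊢
    rw [dist_eq_norm] at hyz
    have e : b m y = b m (y - z) + b m z := by rw [map_sub]; abel
    rw [e]
    refine (norm_add_le _ _).trans_lt ?_
    have := (b m).le_of_opNorm_le (q2 m) (y - z)
    linarith

/-- All proper intervals have infinite dimensional range. -/
def Thick (Q : PreNest F) : Prop :=
  ∀ s t, 0 ≤ s → s < t → t ≤ 1 → ∀ U : Submodule ℂ F, FiniteDimensional ℂ U →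
    ∃ y, ‖y‖ = 1 ∧ Q.N t y = y ∧ Q.N s y = 0 ∧ ∀ u ∈ U, inner ℂ u y = 0

lemma exists_orthonormal {ι : Type*} [Fintype ι] (C : ι → F → Prop) (U : Submodule ℂ F)
    (hU : FiniteDimensional ℂ U)
    (h : ∀ i, ∀ U : Submodule ℂ F, FiniteDimensional ℂ U →
      ∃ y, ‖y‖ = 1 ∧ C i y ∧ ∀ u ∈ U, inner ℂ u y = 0) :
    ∃ k : ι → F, Orthonormal ℂ k ∧ ∀ i, C i (k i) ∧ ∀ u ∈ U, inner ℂ u (k i) = 0 := by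
  classical
  have key : ∀ s : Finset ι, ∃ k : ι → F, (∀ i ∈ s, ‖k i‖ = 1 ∧ C i (k i) ∧
      ∀ u ∈ U, inner ℂ u (k i) = 0) ∧ ∀ i ∈ s, ∀ j ∈ s, i ≠ j → inner ℂ (k i) (k j) = 0 := by
    intro s
    induction s using Finset.induction_on with
    | empty => exact ⟨fun _ => 0, by simp, by simp⟩
    | insert a s ha ih =>
      obtain ⟨k, h1, h2⟩ := ih
      have : FiniteDimensional ℂ (Submodule.span ℂ (k '' (s : Set ι))) :=
        FiniteDimensional.span_of_finite ℂ (s.finite_toSet.image k)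
      obtain ⟨y, hy1, hy2, hy3⟩ := h a (U ⊔ Submodule.span ℂ (k '' (s : Set ι))) inferInstance
      have hne : ∀ i ∈ s, i ≠ a := fun i hi h => ha (h ▸ hi)
      have hyk : ∀ i ∈ s, inner ℂ (k i) y = 0 := fun i hi =>
        hy3 _ (Submodule.mem_sup_right (Submodule.subset_span ⟨i, hi, rfl⟩))
      refine ⟨Function.update k a y, ?_, ?_⟩
      · intro i hi
        rcases Finset.mem_insert.mp hi with rfl | hi
        · simp only [Function.update_self]
          exact ⟨hy1, hy2, fun u hu => hy3 u (Submodule.mem_sup_left hu)⟩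
        · rw [Function.update_of_ne (hne i hi)]; exact h1 i hi
      · intro i hi j hj hij
        rcases Finset.mem_insert.mp hi with hia | his
        · rcases Finset.mem_insert.mp hj with hja | hjs
          · exact absurd (hia.trans hja.symm) hij
          · rw [hia, Function.update_self, Function.update_of_ne (hne j hjs)]
            rw [← inner_conj_symm, hyk j hjs, map_zero]
        · rcases Finset.mem_insert.mp hj with hja | hjs
          · rw [hja, Function.update_self, Function.update_of_ne (hne i his)]
            exact hyk i his
          · rw [Function.update_of_ne (hne j hjs), Function.update_of_ne (hne i his)]
            exact h2 i his j hjs hij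
  obtain ⟨k, h1, h2⟩ := key Finset.univ
  exact ⟨k, ⟨fun i => (h1 i (by simp)).1, fun i j hij => h2 i (by simp) j (by simp) hij⟩,
    fun i => (h1 i (by simp)).2⟩

lemma tri_sum {P : PreNest E} {Q : PreNest F} {ι : Type*} [Fintype ι] {k : ι → F} {g : ι → E}
    {α β : ι → ℝ} {δ : ℝ} (hk : ∀ i, Q.N (β i) (k i) = k i) (hg : ∀ i, P.N (α i) (g i) = 0)
    (h : ∀ i, β i ≤ α i + δ) {s t : ℝ} (hst : s + δ ≤ t) (x : E) :
    Q.N t ((∑ i, rankOne ℂ (k i) (g i)) (P.N s x)) = (∑ i, rankOne ℂ (k i) (g i)) (P.N s x) := by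
  rw [sum_apply, map_sum]
  refine Finset.sum_congr rfl fun i _ => ?_
  rw [rankOne_apply, map_smul]
  by_cases hs : s ≤ α i
  · have : inner ℂ (g i) (P.N s x) = 0 := by
      rw [← P.sa, ← P.mono' hs, hg]; simp
    rw [this]; simp
  · push Not at hs
    rw [← hk i, Q.mono _ _ (by linarith [h i])]

lemma exists_V (P : PreNest E) {Q : PreNest F} (hQ : Q.Thick) (W : Submodule ℂ E)
    (hW : FiniteDimensional ℂ W) (U : Submodule ℂ F) (hU : FiniteDimensional ℂ U)
    {δ : ℝ} (hδ : 0 < δ) : ∃ V : E →L[ℂ] F, V ∈ FR E F ∧ ‖V‖ ≤ 1 ∧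
      (∀ x ∈ W, adjoint V (V x) = x) ∧ (∀ x, ∀ u ∈ U, inner ℂ u (V x) = 0) ∧
      (∀ s t, s + δ ≤ t → ∀ x, Q.N t (V (P.N s x)) = V (P.N s x)) ∧
      (∀ s t, s + δ ≤ t → ∀ y, P.N t (adjoint V (Q.N s y)) = adjoint V (Q.N s y)) := by
  classical
  obtain ⟨m, hm⟩ := exists_nat_gt (1 / δ)
  have hm0 : (0:ℝ) < m := lt_trans (by positivity) hm
  have hmδ : 1 / (m:ℝ) ≤ δ := by
    rw [div_lt_iff₀ hδ] at hm
    rw [div_le_iff₀ hm0]; linarith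
  let EE : Fin m → E →L[ℂ] E := fun j => P.N (((j + 1 : ℕ) : ℝ) / m) - P.N (((j : ℕ) : ℝ) / m)
  let WW : Fin m → Submodule ℂ E := fun j => W.map (EE j).toLinearMap
  have hWW : ∀ j, FiniteDimensional ℂ (WW j) := fun j => inferInstance
  let ι := Σ j : Fin m, Fin (Module.finrank ℂ (WW j))
  let g : ι → E := fun i => (stdOrthonormalBasis ℂ (WW i.1) i.2 : E)
  have hle : ∀ j : Fin m, ((j : ℕ) : ℝ) / m ≤ ((j + 1 : ℕ) : ℝ) / m := fun j => by
    gcongr; norm_num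
  have hlt : ∀ j : Fin m, ((j : ℕ) : ℝ) / m < ((j + 1 : ℕ) : ℝ) / m := fun j => by
    gcongr; norm_num
  have hE1 : ∀ j, ∀ z ∈ WW j, P.N (((j + 1 : ℕ) : ℝ) / m) z = z := by
    rintro j z ⟨w, _, rfl⟩
    change P.N _ (EE j w) = EE j w
    simp only [EE, sub_apply, map_sub]
    rw [P.idem, P.mono _ _ (hle j)]
  have hE0 : ∀ j, ∀ z ∈ WW j, P.N (((j : ℕ) : ℝ) / m) z = 0 := by
    rintro j z ⟨w, _, rfl⟩
    change P.N _ (EE j w) = 0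
    simp only [EE, sub_apply, map_sub]
    rw [P.idem, P.mono' (hle j), sub_self]
  have hgW : ∀ i : ι, g i ∈ WW i.1 := fun i => (stdOrthonormalBasis ℂ (WW i.1) i.2).2
  have horth : ∀ j j' : Fin m, j < j' → ∀ z ∈ WW j, ∀ z' ∈ WW j', inner ℂ z z' = 0 := by
    intro j j' hj z hz z' hz'
    rw [← hE1 j z hz, P.sa]
    have h1 : (((j + 1 : ℕ) : ℝ) / m) ≤ ((j' : ℕ) : ℝ) / m := by
      gcongr; exact hj
    rw [← P.mono' h1, hE0 j' z' hz']; simp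
  have hg : Orthonormal ℂ g := by
    refine ⟨fun i => ?_, ?_⟩
    · have := (stdOrthonormalBasis ℂ (WW i.1)).orthonormal.1 i.2
      exact this
    · rintro ⟨j, i⟩ ⟨j', i'⟩ hne
      rcases lt_trichotomy j j' with h | h | h
      · exact horth j j' h _ (hgW ⟨j, i⟩) _ (hgW ⟨j', i'⟩)
      · subst h
        have hii : i ≠ i' := fun h => hne (by rw [h])
        exact (stdOrthonormalBasis ℂ (WW j)).orthonormal.2 hii
      · rw [← inner_conj_symm, horth j' j h _ (hgW ⟨j', i'⟩) _ (hgW ⟨j, i⟩), map_zero]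
  obtain ⟨k, hk, hk2⟩ := exists_orthonormal (ι := ι)
    (fun i y => Q.N (((i.1 + 1 : ℕ) : ℝ) / m) y = y ∧ Q.N (((i.1 : ℕ) : ℝ) / m) y = 0) U hU (by
      intro i U hU
      obtain ⟨y, h1, h2, h3, h4⟩ := hQ (((i.1 : ℕ) : ℝ) / m) (((i.1 + 1 : ℕ) : ℝ) / m)
        (by positivity) (hlt i.1) (grid_mem (Nat.succ_le_of_lt i.1.2)).2 U hU
      exact ⟨y, h1, ⟨h2, h3⟩, h4⟩)
  have hadj : adjoint (∑ i, rankOne ℂ (k i) (g i)) = ∑ i, rankOne ℂ (g i) (k i) := by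
    rw [map_sum]; simp only [adjoint_rankOne]
  have hβ : ∀ i : ι, ((i.1 + 1 : ℕ) : ℝ) / m ≤ ((i.1 : ℕ) : ℝ) / m + δ := by
    intro i
    push_cast
    rw [add_div]; linarith
  refine ⟨∑ i, rankOne ℂ (k i) (g i), sum_mem fun i _ => FR.rankOne_mem _ _,
    norm_sum_rankOne_le hk hg, ?_, ?_, ?_, ?_⟩
  · intro x hx
    rw [hadj]
    have h1 : (∑ i, rankOne ℂ (k i) (g i)) x = ∑ i, (inner ℂ (g i) x) • k i := by
      simp [sum_apply]
    have h2 : ∀ j, (∑ i, rankOne ℂ (g i) (k i)) (k j) = g j := by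
      intro j
      rw [sum_apply, Finset.sum_eq_single j]
      · rw [rankOne_apply, orthonormal_iff_ite.mp hk]; simp
      · intro i _ hij
        rw [rankOne_apply, orthonormal_iff_ite.mp hk, if_neg hij]; simp
      · simp
    rw [h1, map_sum]
    simp only [map_smul, h2]
    rw [Fintype.sum_sigma]
    have h3 : ∀ j : Fin m, ∑ i, inner ℂ (g ⟨j, i⟩) x • g ⟨j, i⟩ =
        (fun j : ℕ => P.N (((j + 1 : ℕ) : ℝ) / m) x - P.N (((j : ℕ) : ℝ) / m) x) j := by
      intro j
      have hmem : EE j x ∈ WW j := ⟨x, hx, rfl⟩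
      have h4 := (stdOrthonormalBasis ℂ (WW j)).sum_repr' ⟨EE j x, hmem⟩
      have h5 := congr_arg (Subtype.val) h4
      rw [AddSubmonoidClass.coe_finsetSum] at h5
      change _ = EE j x
      refine Eq.trans ?_ h5
      refine Finset.sum_congr rfl fun i _ => ?_
      change _ = inner ℂ (g ⟨j, i⟩) (EE j x) • g ⟨j, i⟩
      congr 1
      simp only [EE, sub_apply, inner_sub_right]
      rw [← P.sa, ← P.sa, hE1 j _ (hgW ⟨j, i⟩), hE0 j _ (hgW ⟨j, i⟩)]
      simp
    rw [Finset.sum_congr rfl fun j _ => h3 j, Fin.sum_univ_eq_sum_range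
      (fun j : ℕ => P.N (((j + 1 : ℕ) : ℝ) / m) x - P.N (((j : ℕ) : ℝ) / m) x),
      Finset.sum_range_sub (fun j : ℕ => P.N ((j : ℝ) / m) x)]
    rw [div_self hm0.ne', P.one 1 le_rfl, P.zero _ (by simp)]
    simp
  · intro x u hu
    rw [sum_apply, inner_sum]
    refine Finset.sum_eq_zero fun i _ => ?_
    rw [rankOne_apply, inner_smul_right, (hk2 i).2 u hu, mul_zero]
  · intro s t hst x
    exact tri_sum (fun i => (hk2 i).1.1) (fun i => hE0 _ _ (hgW i)) hβ hst x
  · intro s t hst y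
    rw [hadj]
    exact tri_sum (fun i => hE1 _ _ (hgW i)) (fun i => (hk2 i).1.2) hβ hst y

end PreNest

end Sequences


section KeyLemma

open InnerProductSpace ContinuousLinearMap

variable {E F G : Type*} [NormedAddCommGroup E] [InnerProductSpace ℂ E] [CompleteSpace E]
  [NormedAddCommGroup F] [InnerProductSpace ℂ F] [CompleteSpace F]
  [NormedAddCommGroup G] [InnerProductSpace ℂ G] [CompleteSpace G]

/-- Norm limits of finite rank operators. -/
noncomputable def KK (E F : Type*) [NormedAddCommGroup E] [InnerProductSpace ℂ E]
    [NormedAddCommGroup F] [InnerProductSpace ℂ F] : Submodule ℂ (E →L[ℂ] F) :=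
  (FR E F).topologicalClosure

lemma FR.mem_KK {T : E →L[ℂ] F} (h : T ∈ FR E F) : T ∈ KK E F :=
  (FR E F).le_topologicalClosure h

lemma KK.map_mem {T : E →L[ℂ] F} (h : T ∈ KK E F) {E' F' : Type*} [NormedAddCommGroup E']
    [InnerProductSpace ℂ E'] [NormedAddCommGroup F'] [InnerProductSpace ℂ F']
    {f : (E →L[ℂ] F) → (E' →L[ℂ] F')} (hf : Continuous f)
    (h2 : ∀ T ∈ FR E F, f T ∈ FR E' F') : f T ∈ KK E' F' := by
  have h' : T ∈ closure (FR E F : Set (E →L[ℂ] F)) := h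
  exact map_mem_closure hf h' h2

lemma KK.comp_left {T : E →L[ℂ] F} (hT : T ∈ KK E F) (S : F →L[ℂ] G) : S ∘L T ∈ KK E G :=
  KK.map_mem hT (f := fun T => S ∘L T) (by fun_prop) fun _ h => FR.comp_left h S

lemma KK.comp_right {T : E →L[ℂ] F} (hT : T ∈ KK E F) (S : G →L[ℂ] E) : T ∘L S ∈ KK G F :=
  KK.map_mem hT (f := fun T => T ∘L S) (by fun_prop) fun _ h => FR.comp_right h S

lemma KK.adjoint_mem {T : E →L[ℂ] F} (hT : T ∈ KK E F) : adjoint T ∈ KK F E :=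
  KK.map_mem hT (f := fun T => adjoint T) (LinearIsometryEquiv.continuous _)
    fun _ h => FR.adjoint_mem h

lemma KK.closed : IsClosed (KK E F : Set (E →L[ℂ] F)) := (FR E F).isClosed_topologicalClosure

lemma KK.compact {T : E →L[ℂ] F} (hT : T ∈ KK E F) : IsCompactOperator T := by
  have h' : T ∈ closure (FR E F : Set (E →L[ℂ] F)) := hT
  have hc : IsClosed {T : E →L[ℂ] F | IsCompactOperator T} := isClosed_setOfPred_isCompactOperator
  exact closure_minimal (fun S hS => FR.compact hS) hc h'

lemma KK.tsum_mem {T : ℕ → E →L[ℂ] F} (hT : ∀ n, T n ∈ FR E F) (hs : Summable T) :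
    ∑' n, T n ∈ KK E F := by
  have := hs.hasSum.tendsto_sum_nat
  refine KK.closed.mem_of_tendsto this (Eventually.of_forall fun m => ?_)
  exact FR.mem_KK (sum_mem fun i _ => hT i)

namespace PreNest

lemma Mor.of_tendsto {P : PreNest E} {Q : PreNest F} {A : ℕ → E →L[ℂ] F} {B : E →L[ℂ] F}
    (hA : ∀ n, Mor P Q (A n)) (h : ∀ z x, Tendsto (fun n => inner ℂ z (A n x)) atTop (𝓝 (inner ℂ z (B x)))) :
    Mor P Q B := by
  intro t x
  apply ext_inner_left ℂ
  intro z
  have h1 := h z (P.N t x)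
  have h2 := h (Q.N t z) (P.N t x)
  rw [Q.sa] at h2
  refine tendsto_nhds_unique h2 (h1.congr fun n => ?_)
  rw [Q.sa, hA n t]

lemma Mor.sum {P : PreNest E} {Q : PreNest F} {A : ℕ → E →L[ℂ] F} (hA : ∀ n, Mor P Q (A n))
    (m : ℕ) : Mor P Q (∑ n ∈ Finset.range m, A n) := by
  intro t x
  rw [sum_apply, map_sum]
  exact Finset.sum_congr rfl fun n _ => hA n t x

lemma step6 (P : PreNest E) {Q : PreNest F} (hQ : Q.Thick) {L L' : ℕ → E →L[ℂ] E}
    (hL : ∀ n, P.TT (L n)) (hL' : ∀ n, P.TT (L' n)) : ∃ V : ℕ → E →L[ℂ] F,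
    (∀ n, V n ∈ FR E F) ∧ (∀ n, ‖V n‖ ≤ 1) ∧ (∀ n x, adjoint (V n) (V n (L n x)) = L n x) ∧
    (∀ n m, n ≠ m → ∀ x y, inner ℂ (V n x) (V m y) = 0) ∧ (∀ n, Mor P Q (V n ∘L L n)) ∧
    (∀ n, Mor Q P (L' n ∘L adjoint (V n))) := by
  let S := {U : Submodule ℂ F // FiniteDimensional ℂ U}
  have hstep : ∀ (n : ℕ) (U : S), ∃ (V : E →L[ℂ] F) (U' : S), V ∈ FR E F ∧ ‖V‖ ≤ 1 ∧
      (∀ x, adjoint V (V (L n x)) = L n x) ∧ (∀ x, ∀ u ∈ U.1, inner ℂ u (V x) = 0) ∧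
      Mor P Q (V ∘L L n) ∧ Mor Q P (L' n ∘L adjoint V) ∧ U.1 ≤ U'.1 ∧ ∀ x, V x ∈ U'.1 := by
    intro n U
    obtain ⟨W, hW, hWm⟩ := FR.findim (hL n).1
    obtain ⟨hf, δ, hδ, hr⟩ := hL n
    obtain ⟨hf', δ', hδ', hr'⟩ := hL' n
    obtain ⟨V, h1, h2, h3, h4, h5, h6⟩ := exists_V P hQ W hW U.1 U.2 (δ := min δ δ') (lt_min hδ hδ')
    obtain ⟨W', hW', hWm'⟩ := FR.findim h1
    have := U.2
    refine ⟨V, ⟨U.1 ⊔ W', inferInstance⟩, h1, h2, fun x => h3 _ (hWm x), h4, ?_, ?_, le_sup_left,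
      fun x => Submodule.mem_sup_right (hWm' x)⟩
    · intro t x
      simp only [ContinuousLinearMap.comp_apply]
      rw [← (hr.mono (min_le_left δ δ')) (t - min δ δ') t (by linarith) x, h5 _ _ (by linarith)]
    · intro t y
      simp only [ContinuousLinearMap.comp_apply]
      rw [← h6 t (t + min δ δ') le_rfl, (hr'.mono (min_le_right δ δ')) t _ le_rfl]
  choose V nxt hV using hstep
  let sq : ℕ → S := fun n => Nat.rec ⟨⊥, inferInstance⟩ nxt n
  have hmono : Monotone fun n => (sq n).1 := monotone_nat_of_le_succ fun n => (hV n (sq n)).2.2.2.2.2.2.1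
  have hort : ∀ n m, n < m → ∀ x y, inner ℂ (V n (sq n) x) (V m (sq m) y) = 0 := by
    intro n m hnm x y
    refine (hV m (sq m)).2.2.2.1 y _ ?_
    have h1 : V n (sq n) x ∈ (sq (n + 1)).1 := (hV n (sq n)).2.2.2.2.2.2.2 x
    exact hmono (Nat.succ_le_of_lt hnm) h1
  refine ⟨fun n => V n (sq n), fun n => (hV n (sq n)).1, fun n => (hV n (sq n)).2.1,
    fun n => (hV n (sq n)).2.2.1, ?_, fun n => (hV n (sq n)).2.2.2.2.1,
    fun n => (hV n (sq n)).2.2.2.2.2.1⟩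
  intro n m hnm x y
  rcases lt_or_gt_of_ne hnm with h | h
  · exact hort n m h x y
  · rw [← inner_conj_symm, hort m n h y x, map_zero]

lemma norm_sum_sq_orth {v : ℕ → F} (hv : ∀ n m, n ≠ m → inner ℂ (v n) (v m) = 0) (s : Finset ℕ) :
    ‖∑ n ∈ s, v n‖ ^ 2 = ∑ n ∈ s, ‖v n‖ ^ 2 := by
  classical
  induction s using Finset.induction_on with
  | empty => simp
  | insert a s ha ih =>
    rw [Finset.sum_insert ha, Finset.sum_insert ha, ← ih, @norm_add_sq ℂ, inner_sum,
      Finset.sum_eq_zero fun i hi => hv a i fun h => ha (h ▸ hi)]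
    simp

/-- The main factorization, before normalization. -/
lemma step7a (P : PreNest E) {Q : PreNest F} (hQ : Q.Thick) (x : ℕ → E)
    (hx : ∀ y, y ∈ closure (Submodule.span ℂ (range x) : Set E)) :
    ∃ (A : E →L[ℂ] F) (B : F →L[ℂ] E) (e : E →L[ℂ] E), Mor P Q A ∧ Mor Q P B ∧ B ∘L A = 1 - e ∧
      e ∈ KK E E ∧ ‖e‖ ≤ 1 / 2 ∧ B - adjoint A ∈ KK F E := by
  obtain ⟨L, L', b, b', e, hL, hL', hLL, heF, hen, hsum, hb, hb', hblim⟩ :=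
    P.step5 x hx (c := 1 / 4) (by norm_num) (by norm_num)
  obtain ⟨V, hVF, hVn, hVL, hVo, hVA, hVB⟩ := P.step6 hQ hL hL'
  have hgeo : ∀ m : ℕ, ∑ n ∈ Finset.range m, (1 / 4 : ℝ) * (1 / 2) ^ n ≤ 1 / 2 := by
    intro m
    rw [← Finset.mul_sum]
    have := sum_le_hasSum (Finset.range m) (fun i _ => by positivity) hasSum_geometric_two
    linarith
  have hgsum : Summable fun n : ℕ => (1 / 4 : ℝ) * (1 / 2) ^ n :=
    summable_geometric_two.mul_left _
  -- the error term
  have hes : Summable e := Summable.of_norm_bounded hgsum hen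
  have heb : ∀ m, ‖∑ n ∈ Finset.range m, e n‖ ≤ 1 / 2 := fun m =>
    (norm_sum_le_of_le _ fun n _ => hen n).trans (hgeo m)
  have hetn : ‖∑' n, e n‖ ≤ 1 / 2 :=
    le_of_tendsto hes.hasSum.tendsto_sum_nat.norm (Eventually.of_forall heb)
  -- square sums
  have hVLn : ∀ n z, ‖V n (L n z)‖ ^ 2 = ‖L n z‖ ^ 2 := by
    intro n z
    have h1 : inner ℂ (V n (L n z)) (V n (L n z)) = inner ℂ (L n z) (L n z) := by
      rw [← adjoint_inner_right, hVL]
    rw [inner_self_eq_norm_sq_to_K, inner_self_eq_norm_sq_to_K] at h1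
    exact_mod_cast h1
  have hsq : ∀ m z, ∑ n ∈ Finset.range m, ‖L n z‖ ^ 2 ≤ 16 * ‖z‖ ^ 2 := by
    intro m z
    set Sg := ∑ n ∈ Finset.range m, ‖L n z‖ ^ 2 with hSg
    have h1 : ∀ n, ‖L n z‖ ^ 2 = (inner ℂ z (L' n (L n z))).re -
        (inner ℂ z ((L' n - adjoint (L n)) (L n z))).re := by
      intro n
      rw [sub_apply, inner_sub_right, adjoint_inner_right, inner_self_eq_norm_sq_to_K]
      rw [Complex.sub_re]
      simp [← Complex.ofReal_pow]
    have h2 : ∀ n, -(inner ℂ z ((L' n - adjoint (L n)) (L n z))).re ≤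
        (1 / 4 * (1 / 2) ^ n) * ‖z‖ ^ 2 + 1 / 4 * ‖L n z‖ ^ 2 := by
      intro n
      have a1 : -(inner ℂ z ((L' n - adjoint (L n)) (L n z))).re ≤
          ‖z‖ * ‖(L' n - adjoint (L n)) (L n z)‖ :=
        (neg_le_abs _).trans ((Complex.abs_re_le_norm _).trans (norm_inner_le_norm _ _))
      have a2 := (L' n - adjoint (L n)).le_of_opNorm_le (hLL n) (L n z)
      have p0 : (0:ℝ) < (1 / 2) ^ n := by positivity
      have p1 : ((1:ℝ) / 2) ^ n ≤ 1 := pow_le_one₀ (by norm_num) (by norm_num)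
      set p : ℝ := (1 / 2) ^ n
      have a3 : ‖z‖ * ‖(L' n - adjoint (L n)) (L n z)‖ ≤ ‖z‖ * (1 / 4 * p * ‖L n z‖) := by gcongr
      have a4 : ‖z‖ * ‖L n z‖ ≤ (‖z‖ ^ 2 + ‖L n z‖ ^ 2) / 2 := by nlinarith [sq_nonneg (‖z‖ - ‖L n z‖)]
      have a5 : p * (‖z‖ * ‖L n z‖) ≤ p * ((‖z‖ ^ 2 + ‖L n z‖ ^ 2) / 2) := by gcongr
      have a6 : p * ‖L n z‖ ^ 2 ≤ 1 * ‖L n z‖ ^ 2 := by gcongr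
      nlinarith [mul_nonneg p0.le (sq_nonneg ‖z‖)]
    have h3 : Sg ≤ (inner ℂ z ((∑ n ∈ Finset.range m, L' n * L n) z)).re +
        (1 / 2 * ‖z‖ ^ 2 + 1 / 4 * Sg) := by
      have e1 : (inner ℂ z ((∑ n ∈ Finset.range m, L' n * L n) z)).re =
          ∑ n ∈ Finset.range m, (inner ℂ z (L' n (L n z))).re := by
        rw [sum_apply, inner_sum, Complex.re_sum]; rfl
      rw [e1]
      have e2 : Sg ≤ ∑ n ∈ Finset.range m, ((inner ℂ z (L' n (L n z))).re +
          ((1 / 4 * (1 / 2) ^ n) * ‖z‖ ^ 2 + 1 / 4 * ‖L n z‖ ^ 2)) := by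
        rw [hSg]
        refine Finset.sum_le_sum fun n _ => ?_
        have := h2 n
        have := h1 n
        linarith
      rw [Finset.sum_add_distrib, Finset.sum_add_distrib, ← Finset.mul_sum, ← Finset.sum_mul] at e2
      have := mul_le_mul_of_nonneg_right (hgeo m) (sq_nonneg ‖z‖)
      linarith
    have h4 : (inner ℂ z ((∑ n ∈ Finset.range m, L' n * L n) z)).re ≤ (11 / 2) * ‖z‖ ^ 2 := by
      rw [hsum]
      refine (Complex.re_le_norm _).trans ((norm_inner_le_norm _ _).trans ?_)
      have hnn : ‖1 - b' m * b m - ∑ n ∈ Finset.range m, e n‖ ≤ 11 / 2 := by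
        have n1 : ‖(1 : E →L[ℂ] E)‖ ≤ 1 := ContinuousLinearMap.norm_id_le
        have n2 : ‖b' m * b m‖ ≤ 2 * 2 := (norm_mul_le _ _).trans
          (mul_le_mul (hb' m) (hb m) (norm_nonneg _) (by norm_num))
        have n3 := norm_sub_le (1 - b' m * b m) (∑ n ∈ Finset.range m, e n)
        have n4 := norm_sub_le 1 (b' m * b m)
        have := heb m
        linarith
      have := (1 - b' m * b m - ∑ n ∈ Finset.range m, e n).le_of_opNorm_le hnn z
      nlinarith [norm_nonneg z]
    nlinarith [sq_nonneg ‖z‖]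
  -- construct A
  have hcau : ∀ z, ∃ y, Tendsto (fun m => (∑ n ∈ Finset.range m, V n ∘L L n) z) atTop (𝓝 y) := by
    intro z
    apply cauchySeq_tendsto_of_complete
    have hssum : Summable fun n => ‖L n z‖ ^ 2 :=
      summable_of_sum_range_le (fun n => sq_nonneg _) (fun m => hsq m z)
    have hc := hssum.hasSum.tendsto_sum_nat.cauchySeq
    rw [Metric.cauchySeq_iff'] at hc ⊢
    intro ε hε
    obtain ⟨N, hN⟩ := hc (ε ^ 2) (by positivity)
    refine ⟨N, fun n hn => ?_⟩
    have h1 := hN n hn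
    rw [dist_eq_norm] at h1 ⊢
    rw [← Finset.sum_Ico_eq_sub _ hn] at h1
    rw [sum_apply, sum_apply, ← Finset.sum_Ico_eq_sub _ hn]
    have h2 := norm_sum_sq_orth (v := fun n => V n (L n z)) (fun i j hij => hVo i j hij _ _)
      (Finset.Ico N n)
    simp only [hVLn] at h2
    rw [Real.norm_of_nonneg (Finset.sum_nonneg fun _ _ => sq_nonneg _), ← h2] at h1
    exact lt_of_pow_lt_pow_left₀ 2 hε.le h1
  choose Af hAf using hcau
  let A : E →L[ℂ] F := continuousLinearMapOfTendsto
    (fun m => ∑ n ∈ Finset.range m, V n ∘L L n) (f := Af) (tendsto_pi_nhds.mpr hAf)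
  have hA : ∀ z, Tendsto (fun m => (∑ n ∈ Finset.range m, V n ∘L L n) z) atTop (𝓝 (A z)) := hAf
  have hMA : Mor P Q A := Mor.of_tendsto (Mor.sum hVA) fun z x => tendsto_const_nhds.inner (hA x)
  -- construct B
  have hadjn : ∀ n, ‖adjoint (V n)‖ ≤ 1 := fun n => by
    rw [LinearIsometryEquiv.norm_map]; exact hVn n
  have hCs : Summable fun n => (L' n - adjoint (L n)) ∘L adjoint (V n) := by
    refine Summable.of_norm_bounded hgsum fun n => ?_
    refine (opNorm_comp_le _ _).trans ?_
    have := hLL n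
    have := mul_le_mul this (hadjn n) (norm_nonneg _) (by positivity)
    linarith
  set C := ∑' n, (L' n - adjoint (L n)) ∘L adjoint (V n) with hC
  have hCK : C ∈ KK F E := KK.tsum_mem (fun n => FR.comp_left (FR.adjoint_mem (hVF n)) _) hCs
  have hBm : ∀ m, ∑ n ∈ Finset.range m, L' n ∘L adjoint (V n) =
      adjoint (∑ n ∈ Finset.range m, V n ∘L L n) +
      ∑ n ∈ Finset.range m, (L' n - adjoint (L n)) ∘L adjoint (V n) := by
    intro m
    rw [map_sum, ← Finset.sum_add_distrib]
    refine Finset.sum_congr rfl fun n _ => ?_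
    rw [adjoint_comp, ContinuousLinearMap.sub_comp]; abel
  have hBlim : ∀ z y, Tendsto (fun m => inner ℂ z ((∑ n ∈ Finset.range m, L' n ∘L adjoint (V n)) y))
      atTop (𝓝 (inner ℂ z ((adjoint A + C) y))) := by
    intro z y
    have h1 : Tendsto (fun m => inner ℂ ((∑ n ∈ Finset.range m, V n ∘L L n) z) y) atTop
        (𝓝 (inner ℂ (A z) y)) := (hA z).inner tendsto_const_nhds
    have h2 : Tendsto (fun m => (∑ n ∈ Finset.range m, (L' n - adjoint (L n)) ∘L adjoint (V n)) y)
        atTop (𝓝 (C y)) :=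
      ((ContinuousLinearMap.apply ℂ E y).continuous.tendsto C).comp hCs.hasSum.tendsto_sum_nat
    have h3 := h1.add ((tendsto_const_nhds (x := z)).inner (𝕜 := ℂ) h2)
    rw [add_apply, inner_add_right, adjoint_inner_right]
    refine h3.congr fun m => ?_
    rw [hBm, add_apply, inner_add_right, adjoint_inner_right]
  have hMB : Mor Q P (adjoint A + C) := Mor.of_tendsto (Mor.sum hVB) hBlim
  refine ⟨A, adjoint A + C, ∑' n, e n, hMA, hMB, ?_, KK.tsum_mem heF hes, hetn, by simpa using hCK⟩
  have hBA : ∀ m z, (∑ n ∈ Finset.range m, L' n ∘L adjoint (V n)) (A z) =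
      (∑ n ∈ Finset.range m, L' n * L n) z := by
    intro m z
    have h1 := (((∑ n ∈ Finset.range m, L' n ∘L adjoint (V n))).continuous.tendsto _).comp (hA z)
    refine tendsto_nhds_unique h1 (tendsto_const_nhds.congr' ?_)
    filter_upwards [eventually_ge_atTop m] with k hk
    simp only [Function.comp]
    rw [sum_apply, sum_apply]
    refine Finset.sum_congr rfl fun n hn => ?_
    have hnk : n ∈ Finset.range k := Finset.mem_range.mpr ((Finset.mem_range.mp hn).trans_le hk)
    simp only [ContinuousLinearMap.comp_apply, sum_apply, map_sum, mul_apply_eq_comp]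
    rw [Finset.sum_eq_single n]
    · rw [hVL]
    · intro i _ hi
      have : adjoint (V n) (V i (L i z)) = 0 := by
        apply ext_inner_left ℂ
        intro w
        rw [adjoint_inner_right, hVo n i hi.symm, inner_zero_right]
      rw [this, map_zero]
    · intro h; exact absurd hnk h
  ext z
  apply ext_inner_left ℂ
  intro w
  have h1 := hBlim w (A z)
  simp only [hBA, hsum] at h1
  refine tendsto_nhds_unique h1 ?_
  have h2 : Tendsto (fun m => b' m (b m z)) atTop (𝓝 0) := by
    rw [tendsto_zero_iff_norm_tendsto_zero]
    have h3 : Tendsto (fun m => 2 * ‖b m z‖) atTop (𝓝 0) := by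
      simpa using (hblim z).norm.const_mul 2
    exact squeeze_zero (fun _ => norm_nonneg _) (fun m => (b' m).le_of_opNorm_le (hb' m) _) h3
  have h3 : Tendsto (fun m => (∑ n ∈ Finset.range m, e n) z) atTop (𝓝 ((∑' n, e n) z)) :=
    ((ContinuousLinearMap.apply ℂ E z).continuous.tendsto _).comp hes.hasSum.tendsto_sum_nat
  have h4 := ((tendsto_const_nhds (x := z)).sub h2).sub h3
  rw [sub_zero] at h4
  exact tendsto_const_nhds.inner h4

/-- The key factorization lemma. -/
lemma step7 (P : PreNest E) {Q : PreNest F} (hQ : Q.Thick) (x : ℕ → E)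
    (hx : ∀ y, y ∈ closure (Submodule.span ℂ (range x) : Set E)) :
    ∃ (A : E →L[ℂ] F) (B : F →L[ℂ] E), Mor P Q A ∧ Mor Q P B ∧ B ∘L A = 1 ∧
      B - adjoint A ∈ KK F E := by
  obtain ⟨A, B, e, hA, hB, hBA, heK, hen, hBK⟩ := P.step7a hQ x hx
  have he1 : ‖e‖ < 1 := by linarith
  set R := ∑' n : ℕ, e ^ n with hR
  have hs : Summable fun n : ℕ => e ^ n := summable_geometric_of_norm_lt_one he1
  have hR1 : R * (1 - e) = 1 := hs.tsum_pow_mul_one_sub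
  have hme : Mor P P e := by
    have := Mor.one.sub (hB.comp hA)
    rwa [hBA, sub_sub_cancel] at this
  have hpow : ∀ i : ℕ, Mor P P (e ^ i) := by
    intro i
    induction i with
    | zero => rw [pow_zero]; exact Mor.one
    | succ i ih => rw [pow_succ]; exact ih.mul hme
  have hMR : Mor P P R := by
    refine Mor.of_tendsto (Mor.sum hpow) fun z y => ?_
    exact tendsto_const_nhds.inner (((ContinuousLinearMap.apply ℂ E y).continuous.tendsto _).comp
      hs.hasSum.tendsto_sum_nat)
  refine ⟨A, R ∘L B, hA, hMR.comp hB, ?_, ?_⟩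
  · rw [ContinuousLinearMap.comp_assoc, hBA]; exact hR1
  · have h1 : R ∘L B - adjoint A = (R ∘L e) ∘L B + (B - adjoint A) := by
      have h2 : R = 1 + R * e := by
        have := hR1
        rw [mul_sub, mul_one] at this
        exact sub_eq_iff_eq_add.mp this
      have h3 : R ∘L e = R - 1 := by
        rw [eq_sub_iff_add_eq, add_comm]; exact h2.symm
      rw [h3, ContinuousLinearMap.sub_comp]
      have : (1 : E →L[ℂ] E) ∘L B = B := by ext; rfl
      rw [this]; abel
    rw [h1]
    exact add_mem (KK.comp_right (KK.comp_left heK R) B) hBK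

end PreNest

end KeyLemma


section Amplification

open InnerProductSpace ContinuousLinearMap

variable {E F G : Type*} [NormedAddCommGroup E] [InnerProductSpace ℂ E] [CompleteSpace E]
  [NormedAddCommGroup F] [InnerProductSpace ℂ F] [CompleteSpace F]
  [NormedAddCommGroup G] [InnerProductSpace ℂ G] [CompleteSpace G]

/-- The countable direct sum of copies of `E`. -/
abbrev Amp (E : Type*) [NormedAddCommGroup E] : Type _ := lp (fun _ : ℕ => E) 2

lemma Amp.hasSum_sq (x : Amp E) : HasSum (fun i => ‖x i‖ ^ 2) (‖x‖ ^ 2) := by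
  have h := lp.hasSum_norm (p := 2) (by norm_num) x
  simpa using h

lemma Amp.memlp {E : Type*} [NormedAddCommGroup E] {f : ℕ → E}
    (h : Summable fun i => ‖f i‖ ^ (2 : ENNReal).toReal) : Memℓp f 2 :=
  memℓp_gen h

lemma Amp.hs {E : Type*} [NormedAddCommGroup E] (x : Amp E) :
    HasSum (fun i => ‖x i‖ ^ (2 : ENNReal).toReal) (‖x‖ ^ (2 : ENNReal).toReal) :=
  lp.hasSum_norm (p := 2) (by norm_num) x

lemma Amp.memL {E : Type*} [NormedAddCommGroup E] (x : Amp E) :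
    Memℓp (fun i => x (i + 1)) 2 :=
  Amp.memlp ((summable_nat_add_iff (f := fun i => ‖x i‖ ^ (2 : ENNReal).toReal) 1).mpr
    (Amp.hs x).summable)

/-- The shifted sequence. -/
def shiftR {E : Type*} [NormedAddCommGroup E] (x : ℕ → E) : ℕ → E
  | 0 => 0
  | (i + 1) => x i

lemma Amp.sumR {E : Type*} [NormedAddCommGroup E] (x : Amp E) :
    Summable (fun i => ‖shiftR x i‖ ^ (2 : ENNReal).toReal) :=
  (summable_nat_add_iff (f := fun i => ‖shiftR x i‖ ^ (2 : ENNReal).toReal) 1).mp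
    (Amp.hs x).summable

/-- Backward shift. -/
noncomputable def Amp.L (E : Type*) [NormedAddCommGroup E] [InnerProductSpace ℂ E] :
    Amp E →L[ℂ] Amp E :=
  LinearMap.mkContinuous
    { toFun := fun x => ⟨fun i => x (i + 1), Amp.memL x⟩
      map_add' := fun x y => by ext i; rfl
      map_smul' := fun c x => by ext i; rfl } 1 (by
    intro x
    rw [one_mul]
    refine lp.norm_le_of_tsum_le (by norm_num) (norm_nonneg _) ?_
    have h := Amp.hs x
    rw [← h.tsum_eq, h.summable.tsum_eq_zero_add]
    refine le_add_of_nonneg_left ?_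
    positivity)

/-- Forward shift. -/
noncomputable def Amp.R (E : Type*) [NormedAddCommGroup E] [InnerProductSpace ℂ E] :
    Amp E →L[ℂ] Amp E :=
  LinearMap.mkContinuous
    { toFun := fun x => ⟨shiftR x, Amp.memlp (Amp.sumR x)⟩
      map_add' := fun x y => by
        ext i
        cases i with
        | zero => exact (add_zero (0 : E)).symm
        | succ i => rfl
      map_smul' := fun c x => by
        ext i
        cases i with
        | zero => exact (smul_zero c).symm
        | succ i => rfl } 1 (by
    intro x
    rw [one_mul]
    refine lp.norm_le_of_tsum_le (by norm_num) (norm_nonneg _) ?_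
    refine le_of_eq ?_
    refine ((Amp.sumR x).tsum_eq_zero_add).trans ?_
    rw [← (Amp.hs x).tsum_eq]
    simp only [shiftR]
    simp)

/-- First coordinate embedding. -/
noncomputable def Amp.i (E : Type*) [NormedAddCommGroup E] [InnerProductSpace ℂ E] : E →L[ℂ] Amp E :=
  lp.singleContinuousLinearMap ℂ (fun _ : ℕ => E) 2 0

/-- First coordinate. -/
noncomputable def Amp.p (E : Type*) [NormedAddCommGroup E] [InnerProductSpace ℂ E] : Amp E →L[ℂ] E :=
  lp.evalCLM ℂ (fun _ : ℕ => E) 2 0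

lemma Amp.L_apply (x : Amp E) (i : ℕ) : Amp.L E x i = x (i + 1) := rfl
lemma Amp.R_zero (x : Amp E) : Amp.R E x 0 = 0 := rfl
lemma Amp.R_succ (x : Amp E) (i : ℕ) : Amp.R E x (i + 1) = x i := rfl
lemma Amp.p_apply (x : Amp E) : Amp.p E x = x 0 := rfl
lemma Amp.i_zero (x : E) : Amp.i E x 0 = x := by simp [Amp.i]
lemma Amp.i_succ (x : E) (i : ℕ) : Amp.i E x (i + 1) = 0 := by simp [Amp.i]

lemma Amp.pi : Amp.p E ∘L Amp.i E = 1 := by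
  ext x
  exact Amp.i_zero x

lemma Amp.LR : Amp.L E ∘L Amp.R E = 1 := by
  ext x i
  rfl

lemma Amp.pR : Amp.p E ∘L Amp.R E = 0 := by
  ext x
  rfl

lemma Amp.Li : Amp.L E ∘L Amp.i E = 0 := by
  ext x i
  exact Amp.i_succ x i

lemma Amp.sum : Amp.i E ∘L Amp.p E + Amp.R E ∘L Amp.L E = 1 := by
  ext x n
  change (Amp.i E (Amp.p E x)) n + (Amp.R E (Amp.L E x)) n = x n
  cases n with
  | zero => rw [Amp.i_zero, Amp.R_zero, Amp.p_apply, add_zero]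
  | succ n => rw [Amp.i_succ, Amp.R_succ, Amp.L_apply, zero_add]

lemma Amp.adj : adjoint (Amp.i E) = Amp.p E := by
  symm
  rw [eq_adjoint_iff]
  intro x y
  exact (lp.inner_single_right (𝕜 := ℂ) 0 y x).symm

namespace PreNest

lemma opNorm_le (P : PreNest E) (t : ℝ) : ‖P.N t‖ ≤ 1 :=
  opNorm_le_bound _ zero_le_one fun x => by rw [one_mul]; exact P.norm_le _ _

/-- The amplified nest. -/
noncomputable def amp (P : PreNest E) : PreNest (Amp E) where
  N t := lp.mapCLM 2 (fun _ : ℕ => P.N t) zero_le_one (fun _ => P.opNorm_le t)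
  sa t x y := by
    rw [lp.inner_eq_tsum, lp.inner_eq_tsum]
    exact tsum_congr fun i => P.sa t (x i) (y i)
  mono s t h x := by
    ext i
    exact P.mono s t h (x i)
  zero t h := by
    ext x i
    change P.N t (x i) = 0
    rw [P.zero t h]; rfl
  one t h := by
    ext x i
    change P.N t (x i) = x i
    rw [P.one t h]; rfl
  cont x := by
    rw [continuous_iff_continuousAt]
    intro t₀
    set T : ℝ → Amp E →L[ℂ] Amp E := fun t =>
      lp.mapCLM 2 (fun _ : ℕ => P.N t) zero_le_one (fun _ => P.opNorm_le t) with hT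
    have hTa : ∀ t i, T t x i = P.N t (x i) := fun t i => rfl
    have hsq : ∀ t, ‖T t x - T t₀ x‖ ^ 2 = ∑' i, ‖P.N t (x i) - P.N t₀ (x i)‖ ^ 2 := by
      intro t
      rw [← (Amp.hasSum_sq (T t x - T t₀ x)).tsum_eq]
      rfl
    have hc : Continuous fun t => ∑' i, ‖P.N t (x i) - P.N t₀ (x i)‖ ^ 2 := by
      refine continuous_tsum (u := fun i => 4 * ‖x i‖ ^ 2) (fun i => ?_)
        ((Amp.hasSum_sq x).summable.mul_left 4) ?_
      · have := P.cont (x i)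
        fun_prop
      · intro i t
        rw [Real.norm_of_nonneg (by positivity)]
        have h1 : ‖P.N t (x i) - P.N t₀ (x i)‖ ≤ 2 * ‖x i‖ := by
          refine (norm_sub_le _ _).trans ?_
          have h2 : ‖P.N t (x i)‖ ≤ ‖x i‖ := P.norm_le _ _
          have h3 : ‖P.N t₀ (x i)‖ ≤ ‖x i‖ := P.norm_le _ _
          linarith
        calc _ ≤ (2 * ‖x i‖) ^ 2 := by gcongr
          _ = _ := by ring
    have h0 := hc.tendsto t₀
    simp only [← hsq] at h0
    rw [sub_self, norm_zero] at h0
    have h1 := h0.sqrt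
    simp only [Real.sqrt_sq (norm_nonneg _)] at h1
    norm_num at h1
    exact tendsto_iff_norm_sub_tendsto_zero.mpr h1

lemma amp_apply (P : PreNest E) (t : ℝ) (x : Amp E) (i : ℕ) : P.amp.N t x i = P.N t (x i) := rfl

lemma mor_L (P : PreNest E) : Mor P.amp P.amp (Amp.L E) := by
  intro t x
  ext i
  rw [amp_apply, Amp.L_apply, amp_apply, P.idem]

lemma mor_R (P : PreNest E) : Mor P.amp P.amp (Amp.R E) := by
  intro t x
  ext i
  rw [amp_apply]
  cases i with
  | zero => rw [Amp.R_zero, map_zero]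
  | succ i => rw [Amp.R_succ, amp_apply, P.idem]

lemma mor_i (P : PreNest E) : Mor P P.amp (Amp.i E) := by
  intro t x
  ext i
  rw [amp_apply]
  cases i with
  | zero => rw [Amp.i_zero, P.idem]
  | succ i => rw [Amp.i_succ, map_zero]

lemma mor_p (P : PreNest E) : Mor P.amp P (Amp.p E) := by
  intro t x
  rw [Amp.p_apply, amp_apply, P.idem]

end PreNest

lemma Amp.total (E : Type*) [NormedAddCommGroup E] [InnerProductSpace ℂ E]
    [TopologicalSpace.SeparableSpace E] : ∃ x : ℕ → Amp E,
    ∀ y, y ∈ closure (Submodule.span ℂ (range x) : Set (Amp E)) := by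
  let d := TopologicalSpace.denseSeq E
  refine ⟨fun n => lp.single 2 n.unpair.1 (d n.unpair.2), fun y => ?_⟩
  set S := (Submodule.span ℂ (range fun n : ℕ =>
    (lp.single 2 n.unpair.1 (d n.unpair.2) : Amp E))).topologicalClosure with hS
  change y ∈ S
  have h1 : ∀ (i : ℕ) (a : E), (lp.single 2 i a : Amp E) ∈ S := by
    intro i a
    have hcl : IsClosed {a : E | (lp.single 2 i a : Amp E) ∈ S} :=
      (Submodule.isClosed_topologicalClosure _).preimage (lp.isometry_single (E := fun _ : ℕ => E) i).continuous
    have hsub : range d ⊆ {a : E | (lp.single 2 i a : Amp E) ∈ S} := by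
      rintro _ ⟨j, rfl⟩
      refine Submodule.le_topologicalClosure _ (Submodule.subset_span ⟨Nat.pair i j, ?_⟩)
      simp
    have := closure_minimal hsub hcl
    exact this ((TopologicalSpace.denseRange_denseSeq E) a)
  have h2 := lp.hasSum_single (p := 2) (by norm_num) y
  refine (Submodule.isClosed_topologicalClosure _).mem_of_tendsto h2 (Eventually.of_forall fun s => ?_)
  exact sum_mem fun i _ => h1 i _

end Amplification


section Pelcz

open InnerProductSpace ContinuousLinearMap

variable {H : Type*} [NormedAddCommGroup H] [InnerProductSpace ℂ H] [CompleteSpace H]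

/-- Clamp to the unit interval. -/
noncomputable def clamp01 (t : ℝ) : ℝ := max 0 (min 1 t)

lemma clamp01_mem (t : ℝ) : clamp01 t ∈ Icc (0 : ℝ) 1 := by
  constructor
  · exact le_max_left _ _
  · exact max_le zero_le_one (min_le_left _ _)

lemma clamp01_eq {t : ℝ} (h : t ∈ Icc (0 : ℝ) 1) : clamp01 t = t := by
  unfold clamp01
  rw [min_eq_right h.2, max_eq_right h.1]

lemma clamp01_mono {s t : ℝ} (h : s ≤ t) : clamp01 s ≤ clamp01 t :=
  max_le_max le_rfl (min_le_min le_rfl h)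

namespace ContinuousNest

lemma sa' (𝒩 : ContinuousNest H) {t : ℝ} (ht : t ∈ Icc (0 : ℝ) 1) (x y : H) :
    inner ℂ (𝒩.N t x) y = inner ℂ x (𝒩.N t y) := by
  have h := 𝒩.selfAdjoint t ht
  rw [← adjoint_inner_right, ← star_eq_adjoint, h.star_eq]

lemma idem' (𝒩 : ContinuousNest H) {t : ℝ} (ht : t ∈ Icc (0 : ℝ) 1) (x : H) :
    𝒩.N t (𝒩.N t x) = 𝒩.N t x :=
  congrArg (fun T : H →L[ℂ] H => T x) (𝒩.idem t ht)

lemma mono' (𝒩 : ContinuousNest H) {s t : ℝ} (hs : s ∈ Icc (0 : ℝ) 1) (ht : t ∈ Icc (0 : ℝ) 1)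
    (h : s ≤ t) (x : H) : 𝒩.N t (𝒩.N s x) = 𝒩.N s x := by
  rcases h.eq_or_lt with rfl | h
  · exact 𝒩.idem' hs x
  · have h1 := (𝒩.range_lt s t hs ht h).le (⟨x, rfl⟩ : 𝒩.N s x ∈ LinearMap.range (𝒩.N s).toLinearMap)
    obtain ⟨y, hy⟩ := h1
    have hy' : 𝒩.N t y = 𝒩.N s x := hy
    rw [← hy', 𝒩.idem' ht]

/-- The total version of the nest. -/
noncomputable def pre (𝒩 : ContinuousNest H) : PreNest H where
  N t := 𝒩.N (clamp01 t)
  sa t x y := 𝒩.sa' (clamp01_mem t) x y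
  mono s t h x := 𝒩.mono' (clamp01_mem s) (clamp01_mem t) (clamp01_mono h) x
  zero t h := by
    have : clamp01 t = 0 := by
      unfold clamp01
      rw [min_eq_right (by linarith), max_eq_left h]
    rw [this, 𝒩.N_zero]
  one t h := by
    have : clamp01 t = 1 := by
      unfold clamp01
      rw [min_eq_left h, max_eq_right zero_le_one]
    rw [this, 𝒩.N_one]
  cont x := by
    have hc : Continuous clamp01 := by unfold clamp01; fun_prop
    exact (𝒩.contOn x).comp_continuous hc clamp01_mem

lemma pre_apply (𝒩 : ContinuousNest H) {t : ℝ} (ht : t ∈ Icc (0 : ℝ) 1) : 𝒩.pre.N t = 𝒩.N t := by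
  change 𝒩.N (clamp01 t) = 𝒩.N t
  rw [clamp01_eq ht]

lemma exists_between (𝒩 : ContinuousNest H) {a b : ℝ} (ha : a ∈ Icc (0 : ℝ) 1)
    (hb : b ∈ Icc (0 : ℝ) 1) (h : a < b) :
    ∃ w : H, w ≠ 0 ∧ 𝒩.pre.N b w = w ∧ 𝒩.pre.N a w = 0 := by
  obtain ⟨x, hx, hxa⟩ := SetLike.exists_of_lt (𝒩.range_lt a b ha hb h)
  obtain ⟨z, hz⟩ := hx
  have hz' : 𝒩.N b z = x := hz
  refine ⟨x - 𝒩.N a x, ?_, ?_, ?_⟩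
  · intro h0
    exact hxa ⟨x, (sub_eq_zero.mp h0).symm⟩
  · rw [𝒩.pre_apply hb, map_sub, 𝒩.mono' ha hb h.le, ← hz', 𝒩.idem' hb]
  · rw [𝒩.pre_apply ha, map_sub, 𝒩.idem' ha, sub_self]

lemma thick (𝒩 : ContinuousNest H) : 𝒩.pre.Thick := by
  intro s t hs hst ht U hU
  set d := Module.finrank ℂ U with hd
  let τ : ℕ → ℝ := fun i => s + (t - s) * (i / (d + 1))
  have hd0 : (0 : ℝ) < d + 1 := by positivity
  have hτm : StrictMono τ := by
    intro i j hij
    have : (i : ℝ) < j := by exact_mod_cast hij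
    have h2 : 0 < t - s := by linarith
    simp only [τ]
    gcongr
  have hτ0 : τ 0 = s := by simp [τ]
  have hτ1 : τ (d + 1) = t := by simp [τ, div_self hd0.ne']
  have hτI : ∀ i, i ≤ d + 1 → τ i ∈ Icc (0 : ℝ) 1 := fun i hi =>
    ⟨by have := hτm.monotone (Nat.zero_le i); linarith, by have := hτm.monotone hi; linarith⟩
  have hw : ∀ i : Fin (d + 1), ∃ w : H, w ≠ 0 ∧ 𝒩.pre.N (τ (i + 1)) w = w ∧ 𝒩.pre.N (τ i) w = 0 :=
    fun i => 𝒩.exists_between (hτI _ (by omega)) (hτI _ (by omega)) (hτm (Nat.lt_succ_self _))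
  choose w hw0 hw1 hw2 using hw
  have hlt : ∀ i j : Fin (d + 1), i < j → inner ℂ (w i) (w j) = 0 := by
    intro i j hij
    have h1 : 𝒩.pre.N (τ j) (w i) = w i := by
      rw [← hw1 i]
      exact 𝒩.pre.mono _ _ (hτm.monotone (by exact hij)) _
    rw [← h1, 𝒩.pre.sa, hw2, inner_zero_right]
  have hli : LinearIndependent ℂ w := by
    refine linearIndependent_of_ne_zero_of_inner_eq_zero hw0 ?_
    intro i j hij
    rcases lt_or_gt_of_ne hij with h | h
    · exact hlt i j h
    · change inner ℂ (w i) (w j) = 0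
      rw [← inner_conj_symm, hlt j i h, map_zero]
  let b := Module.finBasis ℂ U
  let f : (Fin (d + 1) → ℂ) →ₗ[ℂ] (Fin d → ℂ) :=
    LinearMap.pi fun j => (innerSL ℂ (b j : H)).toLinearMap ∘ₗ Fintype.linearCombination ℂ w
  have hker : LinearMap.ker f ≠ ⊥ := LinearMap.ker_ne_bot_of_finrank_lt (by simp)
  obtain ⟨c, hc, hc0⟩ := (Submodule.ne_bot_iff _).mp hker
  set y := ∑ i, c i • w i with hy
  have hy0 : y ≠ 0 := by
    intro h0
    apply hc0
    ext i
    exact Fintype.linearIndependent_iff.mp hli c h0 i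
  have hyb : ∀ j, inner ℂ (b j : H) y = 0 := by
    intro j
    have := congrFun (LinearMap.mem_ker.mp hc) j
    simpa [f, Fintype.linearCombination_apply] using this
  have hyU : ∀ u ∈ U, inner ℂ u y = 0 := by
    intro u hu
    have h1 : u = ∑ j, b.repr ⟨u, hu⟩ j • (b j : H) := by
      have := congrArg U.subtype (b.sum_repr ⟨u, hu⟩)
      rw [map_sum] at this
      exact this.symm
    rw [h1, sum_inner]
    refine Finset.sum_eq_zero fun j _ => ?_
    rw [inner_smul_left, hyb, mul_zero]
  have hyt : 𝒩.pre.N t y = y := by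
    rw [hy, map_sum]
    refine Finset.sum_congr rfl fun i _ => ?_
    rw [map_smul, ← hw1 i, 𝒩.pre.mono]
    rw [← hτ1]
    exact hτm.monotone (by omega)
  have hys : 𝒩.pre.N s y = 0 := by
    rw [hy, map_sum]
    refine Finset.sum_eq_zero fun i _ => ?_
    rw [map_smul, ← 𝒩.pre.mono' (t := τ i), hw2, map_zero, smul_zero]
    rw [← hτ0]
    exact hτm.monotone (by omega)
  refine ⟨((‖y‖⁻¹ : ℝ) : ℂ) • y, ?_, ?_, ?_, ?_⟩
  · rw [norm_smul, Complex.norm_real, norm_inv, norm_norm, inv_mul_cancel₀ (norm_ne_zero_iff.mpr hy0)]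
  · rw [map_smul, hyt]
  · rw [map_smul, hys, smul_zero]
  · intro u hu
    rw [inner_smul_right, hyU u hu, mul_zero]

end ContinuousNest

namespace PreNest

/-- Decomposition data. -/
lemma pel [TopologicalSpace.SeparableSpace H] (P : PreNest H) {Q : PreNest H} (hQ : Q.Thick) :
    ∃ u u' v v' : H →L[ℂ] H, Mor Q P u ∧ Mor P Q u' ∧ Mor Q Q v ∧ Mor Q Q v' ∧
      u * u' = 1 ∧ u * v' = 0 ∧ v * u' = 0 ∧ v * v' = 1 ∧ u' * u + v' * v = 1 ∧
      u - adjoint u' ∈ KK H H := by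
  obtain ⟨x, hx⟩ := Amp.total H
  obtain ⟨A, B, hA, hB, hBA, hK⟩ := P.amp.step7 hQ x hx
  have h1 : ∀ x, B (A x) = x := fun x => congrArg (fun T : Amp H →L[ℂ] Amp H => T x) hBA
  have hpi : ∀ x, Amp.p H (Amp.i H x) = x := fun x => congrArg (fun T : H →L[ℂ] H => T x) Amp.pi
  have hLR : ∀ x, Amp.L H (Amp.R H x) = x := fun x =>
    congrArg (fun T : Amp H →L[ℂ] Amp H => T x) Amp.LR
  have hLi : ∀ x, Amp.L H (Amp.i H x) = 0 := fun x =>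
    congrArg (fun T : H →L[ℂ] Amp H => T x) Amp.Li
  have hpR : ∀ x, Amp.p H (Amp.R H x) = 0 := fun x =>
    congrArg (fun T : Amp H →L[ℂ] H => T x) Amp.pR
  have hsum : ∀ x, Amp.i H (Amp.p H x) + Amp.R H (Amp.L H x) = x := fun x =>
    congrArg (fun T : Amp H →L[ℂ] Amp H => T x) Amp.sum
  have hAB : Mor Q Q (1 - A ∘L B) := Mor.one.sub (hA.comp hB)
  refine ⟨Amp.p H ∘L B, A ∘L Amp.i H, A ∘L Amp.L H ∘L B + (1 - A ∘L B),
    A ∘L Amp.R H ∘L B + (1 - A ∘L B), P.mor_p.comp hB, hA.comp P.mor_i,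
    (hA.comp (P.mor_L.comp hB)).add hAB, (hA.comp (P.mor_R.comp hB)).add hAB, ?_, ?_, ?_, ?_, ?_, ?_⟩
  · ext x; simp [h1, hpi]
  · ext x; simp [h1, hpR]
  · ext x; simp [h1, hLi]
  · ext x; simp [h1, hLR]
  · ext x
    have := congrArg A (hsum (B x))
    rw [map_add] at this
    simp only [add_apply, mul_apply_eq_comp, ContinuousLinearMap.comp_apply, sub_apply,
      one_apply_eq_self, map_add, map_sub, h1, sub_self, add_zero]
    rw [← add_assoc, this]
    simp
  · rw [adjoint_comp, Amp.adj, ← ContinuousLinearMap.comp_sub]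
    exact KK.comp_left hK _

/-- Two thick nests are similar, with extra data. -/
lemma similar [TopologicalSpace.SeparableSpace H] {P Q : PreNest H} (hP : P.Thick) (hQ : Q.Thick) :
    ∃ (u u' : H →L[ℂ] H) (S : (H →L[ℂ] H)ˣ), Mor Q P u ∧ Mor P Q u' ∧ u * u' = 1 ∧
      u - adjoint u' ∈ KK H H ∧ Mor Q P (S : H →L[ℂ] H) ∧ Mor P Q (↑S⁻¹ : H →L[ℂ] H) := by
  obtain ⟨u, u', v, v', hu, hu', hv, hv', h1, h2, h3, h4, h5, hK⟩ := P.pel hQ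
  obtain ⟨w, w', z, z', hw, hw', hz, hz', g1, g2, g3, g4, g5, -⟩ := Q.pel hP
  have e1 : (w' * v + z' * u) * (v' * w + u' * z) = 1 := by
    calc _ = w' * (v * v') * w + w' * (v * u') * z + z' * (u * v') * w + z' * (u * u') * z := by
            noncomm_ring
      _ = _ := by rw [h1, h2, h3, h4]; simpa using g5
  have e2 : (v' * w + u' * z) * (w' * v + z' * u) = 1 := by
    calc _ = v' * (w * w') * v + v' * (w * z') * u + u' * (z * w') * v + u' * (z * z') * u := by
            noncomm_ring
      _ = _ := by rw [g1, g2, g3, g4]; simpa [add_comm] using h5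
  exact ⟨u, u', ⟨w' * v + z' * u, v' * w + u' * z, e1, e2⟩, hu, hu', h1, hK,
    (hw'.comp hv).add (hz'.comp hu), (hv'.comp hw).add (hu'.comp hz)⟩

end PreNest

end Pelcz


section EssNorm

open InnerProductSpace ContinuousLinearMap

variable {H : Type*} [NormedAddCommGroup H] [InnerProductSpace ℂ H] [CompleteSpace H]

lemma essNorm_le (T : H →L[ℂ] H) {K : H →L[ℂ] H} (hK : IsCompactOperator K) :
    essNorm T ≤ ‖T - K‖ := by
  rw [← dist_eq_norm]
  exact Metric.infDist_le_dist_of_mem hK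

lemma essNorm_lt {T : H →L[ℂ] H} {r : ℝ} (h : essNorm T < r) :
    ∃ K : H →L[ℂ] H, IsCompactOperator K ∧ ‖T - K‖ < r := by
  have hne : ({K : H →L[ℂ] H | IsCompactOperator ⇑K}).Nonempty := ⟨0, isCompactOperator_zero⟩
  obtain ⟨K, hK, h⟩ := (Metric.infDist_lt_iff hne).mp h
  exact ⟨K, hK, by rwa [← dist_eq_norm]⟩

lemma essNorm_nonneg (T : H →L[ℂ] H) : 0 ≤ essNorm T := Metric.infDist_nonneg

lemma essNorm_le_norm (T : H →L[ℂ] H) : essNorm T ≤ ‖T‖ := by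
  have := essNorm_le T (K := 0) isCompactOperator_zero
  simpa using this

lemma essNorm_congr_le {T T' : H →L[ℂ] H} (h : IsCompactOperator (T - T')) :
    essNorm T ≤ essNorm T' := by
  refine le_of_forall_gt_imp_ge_of_dense fun r hr => ?_
  obtain ⟨K, hK, hK2⟩ := essNorm_lt hr
  have h1 : IsCompactOperator ⇑(K + (T - T')) := hK.add h
  refine (essNorm_le T h1).trans ?_
  have : T - (K + (T - T')) = T' - K := by abel
  rw [this]; exact hK2.le

lemma essNorm_mul (A T : H →L[ℂ] H) : essNorm (A * T) ≤ essNorm A * essNorm T := by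
  refine le_mul_of_forall_lt₀ fun a ha b hb => ?_
  obtain ⟨K, hK, hK2⟩ := essNorm_lt ha
  obtain ⟨L, hL, hL2⟩ := essNorm_lt hb
  have h1 : IsCompactOperator ⇑(A * L + K * (T - L)) :=
    (hL.clm_comp A).add (hK.comp_clm (T - L))
  refine (essNorm_le _ h1).trans ?_
  have : A * T - (A * L + K * (T - L)) = (A - K) * (T - L) := by noncomm_ring
  rw [this]
  refine (norm_mul_le _ _).trans ?_
  exact mul_le_mul hK2.le hL2.le (norm_nonneg _) ((norm_nonneg _).trans hK2.le)

lemma essNorm_mul3 (A T B : H →L[ℂ] H) : essNorm (A * T * B) ≤ essNorm A * essNorm T * essNorm B :=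
  (essNorm_mul _ _).trans (mul_le_mul_of_nonneg_right (essNorm_mul _ _) (essNorm_nonneg _))

/-- Essential isometries are close to contractions modulo finite rank. -/
lemma ess_iso {a : H →L[ℂ] H} (h : adjoint a * a - 1 ∈ KK H H) {η : ℝ} (hη : 0 < η) :
    ∃ k ∈ KK H H, ‖a - k‖ ≤ 1 + η := by
  have h' : adjoint a * a - 1 ∈ closure (FR H H : Set (H →L[ℂ] H)) := h
  obtain ⟨K, hK, hd⟩ := Metric.mem_closure_iff.mp h' η hη
  rw [dist_eq_norm] at hd
  obtain ⟨W, hW, hWm⟩ := FR.findim (FR.adjoint_mem hK)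
  set p := W.starProjection with hp
  have hpF : p ∈ FR H H := by
    rw [hp, (stdOrthonormalBasis ℂ W).starProjection_eq_sum_rankOne]
    exact sum_mem fun i _ => FR.rankOne_mem _ _
  refine ⟨a * p, FR.mem_KK (FR.mul_left hpF a), ?_⟩
  refine opNorm_le_bound _ (by positivity) fun x => ?_
  set y := x - p x with hy
  have hyx : (a - a * p) x = a y := by simp [hy]
  have hort : ∀ w ∈ W, inner ℂ y w = 0 := fun w hw => W.starProjection_inner_eq_zero x w hw
  have hKy : K y = 0 := by
    apply ext_inner_left ℂ
    intro z
    rw [inner_zero_right, ← adjoint_inner_left, ← inner_conj_symm, hort _ (hWm z), map_zero]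
  have hyn : ‖y‖ ≤ ‖x‖ := by
    have h1 : inner ℂ y y = inner ℂ y x := by
      have h2 : y = x - p x := hy
      conv_lhs => rw [h2]
      rw [← h2, inner_sub_right, hort (p x) (W.starProjection_apply_mem x), sub_zero]
    have h3 : ‖y‖ * ‖y‖ ≤ ‖y‖ * ‖x‖ := by
      have h4 : ‖y‖ * ‖y‖ = ‖(inner ℂ y y : ℂ)‖ := by
        rw [inner_self_eq_norm_sq_to_K]; simp [sq]
      rw [h4, h1]
      exact norm_inner_le_norm _ _
    by_contra hcon
    push Not at hcon
    nlinarith [norm_nonneg x, norm_nonneg y]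
  have hay : ‖a y‖ ^ 2 ≤ (1 + η) * ‖y‖ ^ 2 := by
    have h1 : (inner ℂ (a y) (a y) : ℂ) = inner ℂ y y + inner ℂ y ((adjoint a * a - 1 - K) y) := by
      rw [← adjoint_inner_right, ← inner_add_right]
      congr 1
      simp [hKy]
    have h2 : ‖(inner ℂ (a y) (a y) : ℂ)‖ = ‖a y‖ ^ 2 := by
      rw [inner_self_eq_norm_sq_to_K]; simp
    have h3 : ‖(inner ℂ y y : ℂ)‖ = ‖y‖ ^ 2 := by
      rw [inner_self_eq_norm_sq_to_K]; simp
    rw [← h2, h1]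
    refine (norm_add_le _ _).trans ?_
    rw [h3]
    have h4 : ‖(inner ℂ y ((adjoint a * a - 1 - K) y) : ℂ)‖ ≤ ‖y‖ * (η * ‖y‖) := by
      refine (norm_inner_le_norm _ _).trans ?_
      gcongr
      exact le_of_opNorm_le _ hd.le _
    nlinarith
  rw [hyx]
  refine le_of_sq_le_sq ?_ (by positivity)
  calc ‖a y‖ ^ 2 ≤ (1 + η) * ‖y‖ ^ 2 := hay
    _ ≤ (1 + η) ^ 2 * ‖x‖ ^ 2 := by
      have : 1 + η ≤ (1 + η) ^ 2 := by nlinarith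
      gcongr
    _ = _ := by ring

lemma essNorm_le_one {u u' : H →L[ℂ] H} (h1 : u * u' = 1) (hK : u - adjoint u' ∈ KK H H) :
    essNorm u ≤ 1 ∧ essNorm u' ≤ 1 := by
  have h2 : adjoint u' * u' - 1 ∈ KK H H := by
    have : adjoint u' * u' - 1 = (-(u - adjoint u')) * u' := by rw [← h1]; noncomm_ring
    rw [this]
    exact KK.comp_right (neg_mem hK) u'
  constructor
  · refine le_of_forall_pos_le_add fun η hη => ?_
    obtain ⟨k, hk, hn⟩ := ess_iso h2 hη
    have hk' : adjoint k + (u - adjoint u') ∈ KK H H := add_mem (KK.adjoint_mem hk) hK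
    refine (essNorm_le u (KK.compact hk')).trans ?_
    have : u - (adjoint k + (u - adjoint u')) = adjoint (u' - k) := by rw [map_sub]; abel
    rw [this, LinearIsometryEquiv.norm_map]
    exact hn
  · refine le_of_forall_pos_le_add fun η hη => ?_
    obtain ⟨k, hk, hn⟩ := ess_iso h2 hη
    exact (essNorm_le u' (KK.compact hk)).trans hn

/-- Transfer of the essential norm. -/
lemma essNorm_transfer {u u' E E' : H →L[ℂ] H} (X : H →L[ℂ] H) (h1 : u * u' = 1)
    (hu : essNorm u ≤ 1) (hu' : essNorm u' ≤ 1)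
    (k1 : E' * u' - u' * E ∈ KK H H) (k2 : u * E' - E * u ∈ KK H H) :
    essNorm (E' * (u' * X * u) * E') = essNorm (E * X * E) := by
  have hd : E' * (u' * X * u) * E' - u' * (E * X * E) * u ∈ KK H H := by
    have : E' * (u' * X * u) * E' - u' * (E * X * E) * u =
        (E' * u' - u' * E) * (X * u * E') + (u' * E * X) * (u * E' - E * u) := by noncomm_ring
    rw [this]
    exact add_mem (KK.comp_right k1 _) (KK.comp_left k2 _)
  have hb : ∀ (A T B : H →L[ℂ] H), essNorm A ≤ 1 → essNorm B ≤ 1 → essNorm (A * T * B) ≤ essNorm T := by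
    intro A T B hA hB
    refine (essNorm_mul3 A T B).trans ?_
    have n1 := essNorm_nonneg T
    have n2 := essNorm_nonneg A
    have n3 := essNorm_nonneg B
    calc _ ≤ 1 * essNorm T * 1 := by gcongr
      _ = _ := by ring
  apply le_antisymm
  · exact (essNorm_congr_le (KK.compact hd)).trans (hb _ _ _ hu' hu)
  · have h3 : E * X * E - u * (E' * (u' * X * u) * E') * u' ∈ KK H H := by
      have : E * X * E - u * (E' * (u' * X * u) * E') * u' =
          u * (-(E' * (u' * X * u) * E' - u' * (E * X * E) * u)) * u' := by
        calc E * X * E - u * (E' * (u' * X * u) * E') * u' =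
            (1 : H →L[ℂ] H) * (E * X * E) * 1 - u * (E' * (u' * X * u) * E') * u' := by simp
          _ = _ := by rw [← h1]; noncomm_ring
      rw [this]
      exact KK.comp_right (KK.comp_left (neg_mem hd) u) u'
    exact (essNorm_congr_le (KK.compact h3)).trans (hb _ _ _ hu hu')

namespace PreNest

lemma saN (P : PreNest H) (t : ℝ) : adjoint (P.N t) = P.N t := by
  symm
  rw [eq_adjoint_iff]
  exact fun x y => P.sa t x y

lemma Mor.mul_eq {P Q : PreNest H} {A : H →L[ℂ] H} (h : Mor P Q A) (t : ℝ) :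
    Q.N t * A * P.N t = A * P.N t := by
  ext x
  exact h t x

lemma almost_comm {P Q : PreNest H} {u u' : H →L[ℂ] H} (hu : Mor Q P u) (hu' : Mor P Q u')
    (hK : u - adjoint u' ∈ KK H H) (t : ℝ) :
    Q.N t * u' - u' * P.N t ∈ KK H H ∧ u * Q.N t - P.N t * u ∈ KK H H := by
  have hK' : u' - adjoint u ∈ KK H H := by
    have := neg_mem (KK.adjoint_mem hK)
    rw [map_sub, adjoint_adjoint] at this
    convert this using 1
    abel
  have e1 : Q.N t * adjoint u * P.N t = Q.N t * adjoint u := by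
    have h := congrArg adjoint (hu.mul_eq t)
    simp only [ContinuousLinearMap.mul_def, adjoint_comp, saN] at h
    simpa only [ContinuousLinearMap.mul_def, ContinuousLinearMap.comp_assoc] using h
  have e2 : P.N t * adjoint u' * Q.N t = P.N t * adjoint u' := by
    have h := congrArg adjoint (hu'.mul_eq t)
    simp only [ContinuousLinearMap.mul_def, adjoint_comp, saN] at h
    simpa only [ContinuousLinearMap.mul_def, ContinuousLinearMap.comp_assoc] using h
  constructor
  · have : Q.N t * u' - u' * P.N t = Q.N t * (u' - adjoint u) - Q.N t * ((u' - adjoint u) * P.N t) := by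
      rw [← hu'.mul_eq t]
      calc _ = Q.N t * u' - Q.N t * adjoint u + Q.N t * adjoint u - Q.N t * u' * P.N t := by abel
        _ = Q.N t * u' - Q.N t * adjoint u + Q.N t * adjoint u * P.N t - Q.N t * u' * P.N t := by rw [e1]
        _ = _ := by noncomm_ring
    rw [this]
    exact sub_mem (KK.comp_left hK' _) (KK.comp_left (KK.comp_right hK' _) _)
  · have : u * Q.N t - P.N t * u = P.N t * ((u - adjoint u') * Q.N t) - P.N t * (u - adjoint u') := by
      rw [← hu.mul_eq t]
      calc _ = P.N t * u * Q.N t - P.N t * adjoint u' + P.N t * adjoint u' - P.N t * u := by abel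
        _ = P.N t * u * Q.N t - P.N t * adjoint u' * Q.N t + P.N t * adjoint u' - P.N t * u := by rw [e2]
        _ = _ := by noncomm_ring
    rw [this]
    exact sub_mem (KK.comp_left (KK.comp_right hK _) _) (KK.comp_left hK _)

/-- Compression to an interval is multiplicative on the nest algebra. -/
lemma compress {P : PreNest H} {A B : H →L[ℂ] H} (hA : Mor P P A) (hB : Mor P P B) {s t : ℝ}
    (hst : s ≤ t) :
    (P.N t - P.N s) * (A * B) * (P.N t - P.N s) =
    ((P.N t - P.N s) * A * (P.N t - P.N s)) * ((P.N t - P.N s) * B * (P.N t - P.N s)) := by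
  ext x
  simp only [mul_apply_eq_comp]
  set E := P.N t - P.N s with hE
  have hEa : ∀ z, E z = P.N t z - P.N s z := fun z => rfl
  have hEE : ∀ z, E (E z) = E z := by
    intro z
    simp only [hEa, map_sub, P.idem, P.mono s t hst, P.mono' hst]
    abel
  set y := E x with hy
  have hyt : P.N t y = y := by
    rw [hy, hEa, map_sub, P.idem, P.mono s t hst]
  have h1 : P.N t (B y) = B y := by rw [← hyt]; exact hB t y
  have h2 : B y = E (B y) + P.N s (B y) := by rw [hEa, h1]; abel
  have h3 : E (A (P.N s (B y))) = 0 := by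
    rw [← hA s, hEa, P.mono s t hst, P.idem, sub_self]
  rw [hEE]
  conv_lhs => rw [h2, map_add, map_add, h3, add_zero]

end PreNest

end EssNorm


section Final

open InnerProductSpace ContinuousLinearMap

variable {H : Type*} [NormedAddCommGroup H] [InnerProductSpace ℂ H] [CompleteSpace H]

namespace ContinuousNest

lemma mem_alg_iff (𝒩 : ContinuousNest H) (T : H →L[ℂ] H) :
    T ∈ 𝒩.alg ↔ PreNest.Mor 𝒩.pre 𝒩.pre T := by
  have key : ∀ t, (1 - 𝒩.N t) * T * 𝒩.N t = 0 ↔ ∀ x, 𝒩.N t (T (𝒩.N t x)) = T (𝒩.N t x) := by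
    intro t
    rw [ContinuousLinearMap.ext_iff]
    refine forall_congr' fun x => ?_
    change T (𝒩.N t x) - 𝒩.N t (T (𝒩.N t x)) = 0 ↔ _
    rw [sub_eq_zero, eq_comm]
  constructor
  · intro h t
    exact (key _).mp (h _ (clamp01_mem t))
  · intro h t ht
    rw [key]
    have := h t
    rwa [𝒩.pre_apply ht] at this

lemma N_inj (𝒩 : ContinuousNest H) {s t : ℝ} (hs : s ∈ Icc (0 : ℝ) 1) (ht : t ∈ Icc (0 : ℝ) 1)
    (h : 𝒩.N s = 𝒩.N t) : s = t := by
  rcases lt_trichotomy s t with h1 | h1 | h1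
  · have := 𝒩.range_lt s t hs ht h1
    rw [h] at this
    exact absurd this (lt_irrefl _)
  · exact h1
  · have := 𝒩.range_lt t s ht hs h1
    rw [h] at this
    exact absurd this (lt_irrefl _)

lemma le_of_pos (𝒩 : ContinuousNest H) {s t : ℝ} (hs : s ∈ Icc (0 : ℝ) 1) (ht : t ∈ Icc (0 : ℝ) 1)
    (h : ContinuousLinearMap.IsPositive (𝒩.N t - 𝒩.N s)) : s ≤ t := by
  by_contra hcon
  push Not at hcon
  obtain ⟨w, hw0, hw1, hw2⟩ := 𝒩.exists_between ht hs hcon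
  rw [𝒩.pre_apply hs] at hw1
  rw [𝒩.pre_apply ht] at hw2
  have h1 := h.re_inner_nonneg_left w
  rw [sub_apply, hw1, hw2, zero_sub, inner_neg_left, inner_self_eq_norm_sq_to_K] at h1
  have h2 : 0 < ‖w‖ := norm_pos_iff.mpr hw0
  have h3 : RCLike.re (-((‖w‖ : ℂ) ^ 2)) = -(‖w‖ ^ 2) := by
    rw [← Complex.ofReal_pow, ← Complex.ofReal_neg]
    exact Complex.ofReal_re _
  have h4 : (0 : ℝ) ≤ -(‖w‖ ^ 2) := h3 ▸ h1
  nlinarith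

/-- An automorphism comes from a reparametrization. -/
lemma exists_reparam (𝒩 : ContinuousNest H) {θ : (H →L[ℂ] H) → H →L[ℂ] H} (hθ : 𝒩.IsAuto θ) :
    ∃ σ : ℝ → ℝ, (∀ t ∈ Icc (0 : ℝ) 1, σ t ∈ Icc (0 : ℝ) 1 ∧ θ (𝒩.N t) = 𝒩.N (σ t)) ∧
      StrictMonoOn σ (Icc 0 1) ∧ (∀ r ∈ Icc (0 : ℝ) 1, ∃ t ∈ Icc (0 : ℝ) 1, σ t = r) ∧
      ContinuousOn σ (Icc 0 1) := by
  obtain ⟨⟨hmaps, hinj, hsurj⟩, hord⟩ := hθ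
  have h0 : ∀ t : ℝ, ∃ r : ℝ, t ∈ Icc (0 : ℝ) 1 → r ∈ Icc (0 : ℝ) 1 ∧ θ (𝒩.N t) = 𝒩.N r := by
    intro t
    by_cases ht : t ∈ Icc (0 : ℝ) 1
    · obtain ⟨r, hr, h⟩ := hmaps ⟨t, ht, rfl⟩
      exact ⟨r, fun _ => ⟨hr, h.symm⟩⟩
    · exact ⟨0, fun h => absurd h ht⟩
  choose σ hσ using h0
  have hmono : StrictMonoOn σ (Icc 0 1) := by
    intro s hs t ht hst
    have h1 := hord s t hs ht hst.le
    rw [(hσ s hs).2, (hσ t ht).2] at h1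
    refine lt_of_le_of_ne (𝒩.le_of_pos (hσ s hs).1 (hσ t ht).1 h1) fun heq => ?_
    have h2 : θ (𝒩.N s) = θ (𝒩.N t) := by rw [(hσ s hs).2, (hσ t ht).2, heq]
    exact hst.ne (𝒩.N_inj hs ht (hinj ⟨s, hs, rfl⟩ ⟨t, ht, rfl⟩ h2))
  have hsur : ∀ r ∈ Icc (0 : ℝ) 1, ∃ t ∈ Icc (0 : ℝ) 1, σ t = r := by
    intro r hr
    obtain ⟨T, ⟨t, ht, rfl⟩, h⟩ := hsurj ⟨r, hr, rfl⟩
    refine ⟨t, ht, 𝒩.N_inj (hσ t ht).1 hr ?_⟩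
    rw [← (hσ t ht).2, h]
  refine ⟨σ, fun t ht => hσ t ht, hmono, hsur, ?_⟩
  let f : Icc (0 : ℝ) 1 → Icc (0 : ℝ) 1 := fun t => ⟨σ t, (hσ t t.2).1⟩
  have hf : StrictMono f := fun s t hst => hmono s.2 t.2 hst
  have hfs : Function.Surjective f := by
    intro r
    obtain ⟨t, ht, h⟩ := hsur r r.2
    exact ⟨⟨t, ht⟩, Subtype.ext h⟩
  have hfc : Continuous f := hf.monotone.continuous_of_surjective hfs
  rw [continuousOn_iff_continuous_domRestrict]
  exact continuous_subtype_val.comp hfc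

/-- The reparametrized nest. -/
def reparam (𝒩 : ContinuousNest H) {σ : ℝ → ℝ} (h1 : ∀ t ∈ Icc (0 : ℝ) 1, σ t ∈ Icc (0 : ℝ) 1)
    (h2 : StrictMonoOn σ (Icc 0 1)) (h3 : ∀ r ∈ Icc (0 : ℝ) 1, ∃ t ∈ Icc (0 : ℝ) 1, σ t = r)
    (h4 : ContinuousOn σ (Icc 0 1)) : ContinuousNest H where
  N t := 𝒩.N (σ t)
  idem t ht := 𝒩.idem _ (h1 t ht)
  selfAdjoint t ht := 𝒩.selfAdjoint _ (h1 t ht)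
  range_lt s t hs ht hst := 𝒩.range_lt _ _ (h1 s hs) (h1 t ht) (h2 hs ht hst)
  N_zero := by
    obtain ⟨t, ht, h⟩ := h3 0 ⟨le_rfl, zero_le_one⟩
    have h5 := h2.monotoneOn ⟨le_rfl, zero_le_one⟩ ht ht.1
    have h6 := (h1 0 ⟨le_rfl, zero_le_one⟩).1
    have : σ 0 = 0 := by linarith
    rw [this, 𝒩.N_zero]
  N_one := by
    obtain ⟨t, ht, h⟩ := h3 1 ⟨zero_le_one, le_rfl⟩
    have h5 := h2.monotoneOn ht ⟨zero_le_one, le_rfl⟩ ht.2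
    have h6 := (h1 1 ⟨zero_le_one, le_rfl⟩).2
    have : σ 1 = 1 := by linarith
    rw [this, 𝒩.N_one]
  contOn ξ := (𝒩.contOn ξ).comp h4 h1

lemma directed [TopologicalSpace.SeparableSpace H] (𝒩 : ContinuousNest H) {I : Set (H →L[ℂ] H)}
    (hI : 𝒩.IsIdeal I) {X Y : H →L[ℂ] H} (hX : X ∈ I) (hY : Y ∈ I) {ε δ : ℝ} (hε : 0 < ε)
    (hδ : 0 < δ) : ∃ Z ∈ I, ∃ γ : ℝ, 0 < γ ∧ ∀ E, 𝒩.IsInterval E → essNorm (E * Z * E) < γ →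
      essNorm (E * X * E) < ε ∧ essNorm (E * Y * E) < δ := by
  obtain ⟨u, u', v, v', hu, hu', hv, hv', h1, h2, h3, h4, -, -⟩ := 𝒩.pre.pel 𝒩.thick
  obtain ⟨hIa, -, hadd, -, hmul⟩ := hI
  have hsand : ∀ A B W, PreNest.Mor 𝒩.pre 𝒩.pre A → PreNest.Mor 𝒩.pre 𝒩.pre B → W ∈ I →
      A * W * B ∈ I := fun A B W hA hB hW =>
    (hmul B ((𝒩.mem_alg_iff B).mpr hB) _ (hmul A ((𝒩.mem_alg_iff A).mpr hA) W hW).1).2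
  have hZ : u' * X * u + v' * Y * v ∈ I := hadd _ (hsand _ _ _ hu' hu hX) _ (hsand _ _ _ hv' hv hY)
  set Z := u' * X * u + v' * Y * v with hZd
  have eX : u * Z * u' = X := by
    calc u * Z * u' = (u * u') * X * (u * u') + (u * v') * Y * (v * u') := by
          rw [hZd]; noncomm_ring
      _ = X := by rw [h1, h2]; simp
  have eY : v * Z * v' = Y := by
    calc v * Z * v' = (v * u') * X * (u * v') + (v * v') * Y * (v * v') := by
          rw [hZd]; noncomm_ring
      _ = Y := by rw [h3, h4]; simp
  have hZm := (𝒩.mem_alg_iff Z).mp (hIa hZ)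
  have hbound : ∀ E, 𝒩.IsInterval E → ∀ A B, PreNest.Mor 𝒩.pre 𝒩.pre A →
      PreNest.Mor 𝒩.pre 𝒩.pre B → essNorm (E * (A * Z * B) * E) ≤
        16 * (‖A‖ * ‖B‖) * essNorm (E * Z * E) := by
    rintro E ⟨s, t, hs, hst, ht, hE⟩ A B hA hB
    rw [← 𝒩.pre_apply (t := t) ⟨hs.trans hst, ht⟩, ← 𝒩.pre_apply (t := s) ⟨hs, hst.trans ht⟩] at hE
    have hEn : ‖E‖ ≤ 2 := by
      rw [hE]
      refine (norm_sub_le _ _).trans ?_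
      have a1 := 𝒩.pre.opNorm_le t
      have a2 := 𝒩.pre.opNorm_le s
      linarith
    have hc : E * (A * Z * B) * E = (E * A * E) * (E * Z * E) * (E * B * E) := by
      rw [hE, PreNest.compress (hA.mul hZm) hB hst, PreNest.compress hA hZm hst]
    have hn : ∀ T : H →L[ℂ] H, essNorm (E * T * E) ≤ 4 * ‖T‖ := by
      intro T
      refine (essNorm_le_norm _).trans ?_
      calc ‖E * T * E‖ ≤ ‖E‖ * ‖T‖ * ‖E‖ := (norm_mul_le _ _).trans (by gcongr; exact norm_mul_le _ _)
        _ ≤ 2 * ‖T‖ * 2 := by gcongr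
        _ = _ := by ring
    rw [hc]
    refine (essNorm_mul3 _ _ _).trans ?_
    have n1 := essNorm_nonneg (E * Z * E)
    have n2 := essNorm_nonneg (E * B * E)
    calc _ ≤ (4 * ‖A‖) * essNorm (E * Z * E) * (4 * ‖B‖) := by
          gcongr
          · exact hn A
          · exact hn B
      _ = _ := by ring
  set C := 16 * (‖u‖ * ‖u'‖) + 16 * (‖v‖ * ‖v'‖) + 1 with hC
  have hCpos : 0 < C := by positivity
  have hmin : 0 < min ε δ := lt_min hε hδ
  refine ⟨Z, hZ, min ε δ / C, div_pos hmin hCpos, fun E hE hlt => ?_⟩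
  rw [lt_div_iff₀ hCpos] at hlt
  have n1 := essNorm_nonneg (E * Z * E)
  have b1 := hbound E hE u u' hu hu'
  have b2 := hbound E hE v v' hv hv'
  rw [eX] at b1
  rw [eY] at b2
  have c1 : 16 * (‖u‖ * ‖u'‖) ≤ C := by rw [hC]; linarith [mul_nonneg (norm_nonneg v) (norm_nonneg v')]
  have c2 : 16 * (‖v‖ * ‖v'‖) ≤ C := by rw [hC]; linarith [mul_nonneg (norm_nonneg u) (norm_nonneg u')]
  have d1 := mul_le_mul_of_nonneg_right c1 n1
  have d2 := mul_le_mul_of_nonneg_right c2 n1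
  constructor
  · linarith [min_le_left ε δ]
  · linarith [min_le_right ε δ]

lemma stable [TopologicalSpace.SeparableSpace H] (𝒩 : ContinuousNest H) {I : Set (H →L[ℂ] H)}
    (hI : 𝒩.IsStableIdeal I) {X : H →L[ℂ] H} (hX : X ∈ I) {σ : ℝ → ℝ}
    (h1 : ∀ t ∈ Icc (0 : ℝ) 1, σ t ∈ Icc (0 : ℝ) 1)
    (h2 : StrictMonoOn σ (Icc 0 1)) (h3 : ∀ r ∈ Icc (0 : ℝ) 1, ∃ t ∈ Icc (0 : ℝ) 1, σ t = r)
    (h4 : ContinuousOn σ (Icc 0 1)) : ∃ Y ∈ I, ∀ s ∈ Icc (0 : ℝ) 1, ∀ t ∈ Icc (0 : ℝ) 1,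
      essNorm ((𝒩.N (σ t) - 𝒩.N (σ s)) * Y * (𝒩.N (σ t) - 𝒩.N (σ s))) =
      essNorm ((𝒩.N t - 𝒩.N s) * X * (𝒩.N t - 𝒩.N s)) := by
  set ℳ := 𝒩.reparam h1 h2 h3 h4 with hℳ
  have hMN : ∀ t, ℳ.N t = 𝒩.N (σ t) := fun t => rfl
  obtain ⟨u, u', S, hu, hu', huu, hK, hS, hS'⟩ := PreNest.similar 𝒩.thick ℳ.thick
  have halg : ∀ T, T ∈ 𝒩.alg ↔ T ∈ ℳ.alg := by
    intro T
    constructor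
    · intro h t ht
      exact h _ (h1 t ht)
    · intro h r hr
      obtain ⟨t, ht, rfl⟩ := h3 r hr
      exact h t ht
  obtain ⟨⟨hIa, -, hadd, -, hmul⟩, -, hst⟩ := hI
  have hsand : ∀ A B W, PreNest.Mor 𝒩.pre 𝒩.pre A → PreNest.Mor 𝒩.pre 𝒩.pre B → W ∈ I →
      A * W * B ∈ I := fun A B W hA hB hW =>
    (hmul B ((𝒩.mem_alg_iff B).mpr hB) _ (hmul A ((𝒩.mem_alg_iff A).mpr hA) W hW).1).2
  have hZ : ((S : H →L[ℂ] H) * u') * X * (u * (↑S⁻¹ : H →L[ℂ] H)) ∈ I :=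
    hsand _ _ _ (hS.comp hu') (hu.comp hS') hX
  have himg := hst S⁻¹ (by
    ext T
    constructor
    · rintro ⟨W, hW, rfl⟩
      rw [halg, ℳ.mem_alg_iff]
      rw [𝒩.mem_alg_iff] at hW
      have := (hS'.comp hW).comp hS
      exact this
    · intro hT
      rw [halg, ℳ.mem_alg_iff] at hT
      refine ⟨(S : H →L[ℂ] H) * T * (↑S⁻¹ : H →L[ℂ] H), ?_, ?_⟩
      · rw [𝒩.mem_alg_iff]
        exact (hS.comp hT).comp hS'
      · simp [mul_assoc])
  have hY : u' * X * u ∈ I := by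
    rw [← himg]
    exact ⟨_, hZ, by simp [mul_assoc]⟩
  obtain ⟨n1, n2⟩ := essNorm_le_one huu hK
  refine ⟨_, hY, fun s hs t ht => ?_⟩
  have as := PreNest.almost_comm hu hu' hK s
  have at' := PreNest.almost_comm hu hu' hK t
  rw [ℳ.pre_apply hs, 𝒩.pre_apply hs, hMN] at as
  rw [ℳ.pre_apply ht, 𝒩.pre_apply ht, hMN] at at'
  refine essNorm_transfer X huu n1 n2 ?_ ?_
  · convert sub_mem at'.1 as.1 using 1
    noncomm_ring
  · convert sub_mem at'.2 as.2 using 1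
    noncomm_ring

end ContinuousNest

end Final

theorem stmt7 {H : Type*} [NormedAddCommGroup H] [InnerProductSpace ℂ H] [CompleteSpace H]
    [TopologicalSpace.SeparableSpace H] (hH : ¬FiniteDimensional ℂ H)
    (𝒩 : ContinuousNest H) (I : Set (H →L[ℂ] H)) (hI : 𝒩.IsStableIdeal I) :
    𝒩.IsStableNet {P | ∃ X ∈ I, ∃ ε : ℝ, 0 < ε ∧
      P = {E | 𝒩.IsInterval E ∧ essNorm (E * X * E) < ε}} := by
  refine ⟨⟨?_, ?_⟩, ?_⟩
  · rintro P ⟨X, hX, ε, hε, rfl⟩ E hE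
    exact hE.1
  · rintro P ⟨X, hX, ε, hε, rfl⟩ Q ⟨Y, hY, δ, hδ, rfl⟩
    obtain ⟨Z, hZ, γ, hγ, h⟩ := 𝒩.directed hI.1 hX hY hε hδ
    refine ⟨_, ⟨Z, hZ, γ, hγ, rfl⟩, ?_, ?_⟩
    · intro E hE
      refine ⟨E, ⟨hE.1, (h E hE.1 hE.2).1⟩, ?_⟩
      rw [sub_self]
      exact ContinuousLinearMap.isPositive_zero
    · intro E hE
      refine ⟨E, ⟨hE.1, (h E hE.1 hE.2).2⟩, ?_⟩
      rw [sub_self]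
      exact ContinuousLinearMap.isPositive_zero
  · rintro θ hθ P ⟨X, hX, ε, hε, rfl⟩
    obtain ⟨σ, h1, h2, h3, h4⟩ := 𝒩.exists_reparam hθ
    obtain ⟨Y, hY, h⟩ := 𝒩.stable hI hX (fun t ht => (h1 t ht).1) h2 h3 h4
    refine ⟨Y, hY, ε, hε, ?_⟩
    ext E
    constructor
    · rintro ⟨s, t, hs, hst, ht, ⟨-, hlt⟩, rfl⟩
      have hsI : s ∈ Icc (0 : ℝ) 1 := ⟨hs, hst.trans ht⟩
      have htI : t ∈ Icc (0 : ℝ) 1 := ⟨hs.trans hst, ht⟩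
      rw [(h1 s hsI).2, (h1 t htI).2]
      refine ⟨⟨σ s, σ t, (h1 s hsI).1.1, h2.monotoneOn hsI htI hst, (h1 t htI).1.2, rfl⟩, ?_⟩
      rw [h s hsI t htI]
      exact hlt
    · rintro ⟨⟨a, b, ha, hab, hb, rfl⟩, hlt⟩
      obtain ⟨s, hsI, rfl⟩ := h3 a ⟨ha, hab.trans hb⟩
      obtain ⟨t, htI, rfl⟩ := h3 b ⟨ha.trans hab, hb⟩
      have hst : s ≤ t := (h2.le_iff_le hsI htI).mp hab
      refine ⟨s, t, hsI.1, hst, htI.2, ⟨⟨s, t, hsI.1, hst, htI.2, rfl⟩, ?_⟩, ?_⟩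
      · rw [← h s hsI t htI]
        exact hlt
      · rw [(h1 s hsI).2, (h1 t htI).2]
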